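/- Let n ≥ 2 and let Ω be a domain in ℝⁿ. Let 𝔘(Ω) be the set of n-component vector fields u whose components are harmonic in Ω and which satisfy sup_Ω |u| ≤ 1. Suppose a point ξ ∈ ∂Ω can be touched by an interior ball B ⊂ Ω. Then limsup_{x→ξ} sup_{u∈𝔘(Ω)} |x−ξ| · |div u(x)| ≤ D_n, where x ranges over points of the radius of B directed from the center of B to ξ, and D_n = (2 ω_{n−1} / ω_n) ∫₀^{π/2} [1 + n(n−2) cos²θ]^{1/2} sin^{n−2}θ dθ. -/

import Mathlib

open MeasureTheory Real Filter Metric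
open scoped Real RealInnerProductSpace

noncomputable section

/-- `Eu n` is the Euclidean space `ℝⁿ`. -/
abbrev Eu (n : ℕ) := EuclideanSpace ℝ (Fin n)

/-- `ω_n`: the surface area of the unit sphere `S^{n-1}` in `ℝⁿ`,
given by the classical formula `2 π^{n/2} / Γ(n/2)`. -/
def sphereArea (n : ℕ) : ℝ := 2 * π ^ ((n : ℝ) / 2) / Real.Gamma ((n : ℝ) / 2)

/-- A function is harmonic on a set: it is twice continuously differentiable
there and its Laplacian (the sum of the pure second partial derivatives in the
coordinate directions) vanishes at every point of the set. -/
def IsHarmonicOn {n : ℕ} (u : Eu n → ℝ) (Ω : Set (Eu n)) : Prop :=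
  ContDiffOn ℝ 2 u Ω ∧ ∀ x ∈ Ω,
    ∑ i, fderiv ℝ (fun y => fderiv ℝ u y (EuclideanSpace.single i 1)) x
      (EuclideanSpace.single i 1) = 0

/-- The divergence `div u(x) = ∑ⱼ ∂uⱼ/∂xⱼ (x)` of a vector field `u : ℝⁿ → ℝⁿ`. -/
def divg {n : ℕ} (u : Eu n → Eu n) (x : Eu n) : ℝ :=
  ∑ j, fderiv ℝ (fun y => u y j) x (EuclideanSpace.single j 1)

/-- The constant `D_n = (2 ω_{n-1}/ω_n) ∫₀^{π/2} (1 + n(n-2) cos²θ)^{1/2} sin^{n-2}θ dθ`. -/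
def Dconst (n : ℕ) : ℝ :=
  (2 * sphereArea (n - 1) / sphereArea n) *
    ∫ θ in (0:ℝ)..(π / 2),
      Real.sqrt (1 + (n : ℝ) * ((n : ℝ) - 2) * Real.cos θ ^ 2) * Real.sin θ ^ (n - 2)

/-!
Let `V` be the field `z ↦ ‖z‖ ^ (-n) • z` of a point charge, regularized near the origin, so that
its divergence `ρ` is a radial mollifier of total mass `ω_n` and `Δ V = ∇ ρ`. For `u` harmonic in
the half-space with inner unit normal `ν`, integrating by parts gives
`∫ ρ (y - ν) * div u = -∫ ⟪u, Δ V (y - ν)⟫`. Subtracting from `V (y - ν)` its mirror image, which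
has no charge in the half-space, yields a field vanishing on the boundary, and Green's identity
turns the right-hand side into `2 ∫ ⟪u, ∂V/∂ν⟫` over the boundary hyperplane. The norm of `∂V/∂ν`
there does not depend on the regularization, and twice its integral is `ω_n D_n`; hence `|div u ν|`
is at most `D_n` when `‖u‖ ≤ 1`.

To need `u` only on a half-ball of radius `2 / s`, the charge is screened by an opposite charge
spread over a ball of radius `s⁻¹`; by homogeneity the screening costs `O(s)`, uniformly in `u`.
Finally, a ball seen from close to its boundary point `ξ` contains, after rescaling, such a
half-ball slightly lifted off the tangent hyperplane at `ξ`.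
-/

open InnerProductSpace Laplacian Gradient Topology ContDiff
open Module (finrank)

section NormedSpace

variable {E F : Type*} [NormedAddCommGroup E] [NormedSpace ℝ E]
  [NormedAddCommGroup F] [NormedSpace ℝ F]

/-- The divergence of a vector field on a finite-dimensional normed space, as the trace of its
derivative; in coordinates this is `divg`. -/
def divergence (u : E → E) (x : E) : ℝ := LinearMap.trace ℝ E (fderiv ℝ u x)

lemma fderiv_comp_add_smul (p : E) (d : ℝ) (f : E → F) (x : E) :
    fderiv ℝ (fun y => f (p + d • y)) x = d • fderiv ℝ f (p + d • x) := by
  rw [fderiv_comp_smul (f := fun z => f (p + z)), fderiv_comp_add_left]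

lemma differentiableAt_fderiv_apply {f : E → F} {x : E} (hf : ContDiffAt ℝ 2 f x) (v : E) :
    DifferentiableAt ℝ (fun y => fderiv ℝ f y v) x :=
  ((hf.fderiv_right (m := 1) le_rfl).differentiableAt one_ne_zero).clm_apply
    (differentiableAt_const v)

lemma divergence_comp_add_smul (p : E) (d : ℝ) (u : E → E) (x : E) :
    divergence (fun y => u (p + d • y)) x = d * divergence u (p + d • x) := by
  simp [divergence, fderiv_comp_add_smul]

end NormedSpace

section InnerProductSpace

variable {E F : Type*} [NormedAddCommGroup E] [InnerProductSpace ℝ E]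
  [NormedAddCommGroup F] [NormedSpace ℝ F] {ι : Type*} [Fintype ι]

lemma divergence_eq_sum_inner (b : OrthonormalBasis ι ℝ E) (u : E → E) (x : E) :
    divergence u x = ∑ i, ⟪b i, fderiv ℝ u x (b i)⟫ :=
  LinearMap.trace_eq_sum_inner _ b

lemma hasFDerivAt_comp_norm_sq {g : ℝ → ℝ} {x : E} (hg : DifferentiableAt ℝ g (‖x‖ ^ 2)) :
    HasFDerivAt (fun y : E => g (‖y‖ ^ 2)) ((2 * deriv g (‖x‖ ^ 2)) • innerSL ℝ x) x := by
  have hnorm := (hasStrictFDerivAt_norm_sq x).hasFDerivAt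
  refine (hg.hasDerivAt.comp_hasFDerivAt x hnorm).congr_fderiv ?_
  ext v
  simp [mul_assoc, mul_left_comm]

variable [FiniteDimensional ℝ E]

lemma contDiff_divergence {u : E → E} {m : WithTop ℕ∞} (hu : ContDiff ℝ (m + 1) u) :
    ContDiff ℝ m (divergence u) := by
  rw [funext (divergence_eq_sum_inner (stdOrthonormalBasis ℝ E) u)]
  exact ContDiff.sum fun i _ =>
    contDiff_const.inner ℝ ((hu.fderiv_right le_rfl).clm_apply contDiff_const)

lemma divergence_smul {φ : E → ℝ} {u : E → E} {x : E} (hφ : DifferentiableAt ℝ φ x)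
    (hu : DifferentiableAt ℝ u x) :
    divergence (fun y => φ y • u y) x = ⟪u x, ∇ φ x⟫ + φ x * divergence u x := by
  rw [divergence, fderiv_fun_smul hφ hu]
  simp [divergence, add_comm]

lemma laplacian_eq_sum_fderiv {f : E → F} {x : E} (hf : ContDiffAt ℝ 2 f x)
    (b : OrthonormalBasis ι ℝ E) :
    Δ f x = ∑ i, fderiv ℝ (fun y => fderiv ℝ f y (b i)) x (b i) := by
  have hf' : DifferentiableAt ℝ (fderiv ℝ f) x :=
    (hf.fderiv_right (m := 1) le_rfl).differentiableAt one_ne_zero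
  rw [laplacian_eq_iteratedFDeriv_orthonormalBasis f b]
  refine Finset.sum_congr rfl fun i _ => ?_
  rw [iteratedFDeriv_two_apply, fderiv_clm_apply hf' (differentiableAt_const _)]
  simp

lemma continuous_laplacian {f : E → F} (hf : ContDiff ℝ 2 f) : Continuous (Δ f) := by
  rw [laplacian_eq_iteratedFDeriv_stdOrthonormalBasis]
  have := hf.continuous_iteratedFDeriv (m := 2) le_rfl
  fun_prop

lemma laplacian_comp_add_smul (p : E) (d : ℝ) (f : E → F) (x : E) :
    Δ (fun y => f (p + d • y)) x = d ^ 2 • Δ f (p + d • x) := by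
  have hsecond : fderiv ℝ (fderiv ℝ fun y => f (p + d • y)) x
      = d • d • fderiv ℝ (fderiv ℝ f) (p + d • x) := by
    rw [funext (fderiv_comp_add_smul p d f), ← fderiv_comp_add_smul p d (fderiv ℝ f)]
    exact congrFun (fderiv_const_smul_field (f := fun y => fderiv ℝ f (p + d • y)) d) x
  simp_rw [laplacian_eq_iteratedFDeriv_stdOrthonormalBasis, iteratedFDeriv_two_apply, hsecond,
    Finset.smul_sum, sq, mul_smul]
  rfl

lemma laplacian_comp_linearIsometryEquiv {f : E → F} (hf : ContDiff ℝ 2 f) (L : E ≃ₗᵢ[ℝ] E)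
    (x : E) : Δ (fun y => f (L y)) x = Δ f (L x) := by
  set b := stdOrthonormalBasis ℝ E
  rw [laplacian_eq_iteratedFDeriv_orthonormalBasis _ b,
    laplacian_eq_iteratedFDeriv_orthonormalBasis _ (b.map L)]
  refine Finset.sum_congr rfl fun i _ => ?_
  have hcomp := (L.toContinuousLinearEquiv : E →L[ℝ] E).iteratedFDeriv_comp_right hf x
    (i := 2) le_rfl
  refine (congrArg (· ![b i, b i]) hcomp).trans ?_
  rw [ContinuousMultilinearMap.compContinuousLinearMap_apply]
  congr 1
  ext j
  fin_cases j <;> rfl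

lemma laplacian_smul_fun {φ : E → ℝ} {f : E → F} {x : E} (hφ : ContDiffAt ℝ 2 φ x)
    (hf : ContDiffAt ℝ 2 f x) :
    Δ (fun y => φ y • f y) x
      = φ x • Δ f x + (2 : ℝ) • fderiv ℝ f x (∇ φ x) + Δ φ x • f x := by
  set b := stdOrthonormalBasis ℝ E
  have hDφ := differentiableAt_fderiv_apply hφ
  have hDf := differentiableAt_fderiv_apply hf
  have hφ1 := hφ.differentiableAt two_ne_zero
  have hf1 := hf.differentiableAt two_ne_zero
  have hfirst (v : E) : (fun y => fderiv ℝ (fun y => φ y • f y) y v)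
      =ᶠ[𝓝 x] fun y => φ y • fderiv ℝ f y v + fderiv ℝ φ y v • f y := by
    filter_upwards [hφ.eventually (by simp), hf.eventually (by simp)] with y hφy hfy
    rw [fderiv_fun_smul (hφy.differentiableAt two_ne_zero) (hfy.differentiableAt two_ne_zero)]
    simp
  have hsecond (v : E) : fderiv ℝ (fun y => fderiv ℝ (fun y => φ y • f y) y v) x v
      = φ x • fderiv ℝ (fun y => fderiv ℝ f y v) x v + (2 : ℝ) • fderiv ℝ f x (⟪v, ∇ φ x⟫ • v)
        + fderiv ℝ (fun y => fderiv ℝ φ y v) x v • f x := by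
    rw [(hfirst v).fderiv_eq, fderiv_fun_add (hφ1.fun_smul (hDf v)) ((hDφ v).fun_smul hf1),
      fderiv_fun_smul hφ1 (hDf v), fderiv_fun_smul (hDφ v) hf1]
    simp [two_smul]
    abel
  rw [laplacian_eq_sum_fderiv (hφ.fun_smul hf) b, laplacian_eq_sum_fderiv hf b,
    laplacian_eq_sum_fderiv hφ b]
  simp_rw [hsecond, Finset.sum_add_distrib, ← Finset.smul_sum, ← Finset.sum_smul, ← map_sum,
    ← b.repr_apply_apply, b.sum_repr]

lemma gradient_comp_norm_sq {g : ℝ → ℝ} {x : E} (hg : DifferentiableAt ℝ g (‖x‖ ^ 2)) :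
    ∇ (fun y : E => g (‖y‖ ^ 2)) x = (2 * deriv g (‖x‖ ^ 2)) • x := by
  refine HasGradientAt.gradient (hasGradientAt_iff_hasFDerivAt.2 ?_)
  refine (hasFDerivAt_comp_norm_sq hg).congr_fderiv ?_
  ext v
  simp

lemma laplacian_comp_norm_sq {g : ℝ → ℝ} {x : E} (hg : ContDiffAt ℝ 2 g (‖x‖ ^ 2)) :
    Δ (fun y : E => g (‖y‖ ^ 2)) x
      = 4 * ‖x‖ ^ 2 * deriv (deriv g) (‖x‖ ^ 2) + 2 * finrank ℝ E * deriv g (‖x‖ ^ 2) := by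
  set b := stdOrthonormalBasis ℝ E
  have hnorm : ContDiff ℝ 2 fun y : E => ‖y‖ ^ 2 := contDiff_norm_sq ℝ
  have hg' : DifferentiableAt ℝ (deriv g) (‖x‖ ^ 2) := differentiableAt_fderiv_apply hg 1
  have hfirst (v : E) : (fun y => fderiv ℝ (fun y : E => g (‖y‖ ^ 2)) y v)
      =ᶠ[𝓝 x] fun y => 2 * deriv g (‖y‖ ^ 2) * ⟪y, v⟫ := by
    filter_upwards [hnorm.continuous.continuousAt.eventually (hg.eventually (by simp))] with y hy
    rw [(hasFDerivAt_comp_norm_sq (hy.differentiableAt two_ne_zero)).fderiv]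
    simp
  have hsecond (v : E) : fderiv ℝ (fun y => fderiv ℝ (fun y : E => g (‖y‖ ^ 2)) y v) x v
      = 4 * deriv (deriv g) (‖x‖ ^ 2) * ⟪x, v⟫ ^ 2 + 2 * deriv g (‖x‖ ^ 2) * ‖v‖ ^ 2 := by
    have hinner : HasFDerivAt (fun y : E => ⟪y, v⟫) (innerSL ℝ v) x := by
      simpa [real_inner_comm] using (innerSL ℝ v).hasFDerivAt (x := x)
    rw [(hfirst v).fderiv_eq, (((hasFDerivAt_comp_norm_sq hg').const_mul 2).fun_mul hinner).fderiv]
    simp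
    ring
  rw [laplacian_eq_sum_fderiv (hg.fun_comp x hnorm.contDiffAt) b]
  simp_rw [hsecond, Finset.sum_add_distrib, ← Finset.mul_sum, b.sum_sq_inner_left]
  simp [b]
  ring

lemma inner_laplacian_sub_eq_sum_fderiv {G : Type*} [NormedAddCommGroup G] [InnerProductSpace ℝ G]
    {u w : E → G} {x : E} (hu : ContDiffAt ℝ 2 u x) (hw : ContDiffAt ℝ 2 w x)
    (b : OrthonormalBasis ι ℝ E) :
    ⟪u x, Δ w x⟫ - ⟪Δ u x, w x⟫
      = ∑ i, fderiv ℝ (fun y => ⟪u y, fderiv ℝ w y (b i)⟫ - ⟪fderiv ℝ u y (b i), w y⟫) x (b i) := by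
  rw [laplacian_eq_sum_fderiv hu b, laplacian_eq_sum_fderiv hw b, inner_sum, sum_inner,
    ← Finset.sum_sub_distrib]
  refine Finset.sum_congr rfl fun i _ => ?_
  have hu1 := hu.differentiableAt two_ne_zero
  have hw1 := hw.differentiableAt two_ne_zero
  have hu2 := differentiableAt_fderiv_apply hu (b i)
  have hw2 := differentiableAt_fderiv_apply hw (b i)
  rw [fderiv_fun_sub (hu1.inner ℝ hw2) (hu2.inner ℝ hw1), _root_.sub_apply,
    fderiv_inner_apply ℝ hu1 hw2, fderiv_inner_apply ℝ hu2 hw1]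
  ring

end InnerProductSpace

section HalfSpace

variable {E F : Type*} [NormedAddCommGroup E] [InnerProductSpace ℝ E] [NormedAddCommGroup F]
  [InnerProductSpace ℝ F] {ν : E}

/-- The open half-space with inner normal `ν`, bounded by the hyperplane `(ℝ ∙ ν)ᗮ`. -/
def halfSpace (ν : E) : Set E := {y | 0 < ⟪ν, y⟫}

lemma measurableSet_halfSpace [MeasurableSpace E] [OpensMeasurableSpace E] (ν : E) :
    MeasurableSet (halfSpace ν) :=
  (isOpen_lt continuous_const (continuous_const.inner continuous_id)).measurableSet

lemma inner_smul_add_orthogonal (hν : ‖ν‖ = 1) (r : ℝ) (z : (ℝ ∙ ν)ᗮ) :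
    ⟪ν, r • ν + (z : E)⟫ = r := by
  rw [inner_add_right, real_inner_smul_right, real_inner_self_eq_norm_sq, hν,
    Submodule.mem_orthogonal_singleton_iff_inner_right.1 z.2]
  ring

lemma norm_sub_sq_of_mem_orthogonal (hν : ‖ν‖ = 1) (z : (ℝ ∙ ν)ᗮ) :
    ‖(z : E) - ν‖ ^ 2 = 1 + ‖z‖ ^ 2 := by
  rw [norm_sub_sq_real, Submodule.mem_orthogonal_singleton_iff_inner_left.1 z.2, hν,
    ← Submodule.coe_norm]
  ring

variable [FiniteDimensional ℝ E] [MeasurableSpace E] [BorelSpace E]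

lemma measurePreserving_smul_add_orthogonal (hν : ‖ν‖ = 1) :
    MeasurePreserving fun p : ℝ × (ℝ ∙ ν)ᗮ => p.1 • ν + (p.2 : E) := by
  let normalCoordinates : WithLp 2 (ℝ × (ℝ ∙ ν)ᗮ) ≃ₗᵢ[ℝ] E :=
    (LinearIsometryEquiv.withLpProdCongr 2 (LinearIsometryEquiv.toSpanUnitSingleton ν hν)
      (LinearIsometryEquiv.refl ℝ _)).trans (ℝ ∙ ν).orthogonalDecomposition.symm
  exact normalCoordinates.measurePreserving.comp (WithLp.volume_preserving_toLp ℝ (ℝ ∙ ν)ᗮ)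

lemma measurePreserving_restrict_halfSpace (hν : ‖ν‖ = 1) :
    MeasurePreserving (fun p : ℝ × (ℝ ∙ ν)ᗮ => p.1 • ν + (p.2 : E))
      ((volume.restrict (Set.Ioi 0)).prod volume) (volume.restrict (halfSpace ν)) := by
  have hpreimage : (fun p : ℝ × (ℝ ∙ ν)ᗮ => p.1 • ν + (p.2 : E)) ⁻¹' halfSpace ν
      = Set.Ioi 0 ×ˢ Set.univ := by
    ext p
    simp [halfSpace, inner_smul_add_orthogonal hν]
  have hmp := (measurePreserving_smul_add_orthogonal hν).restrict_preimage
    (measurableSet_halfSpace ν)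
  rwa [hpreimage, Measure.volume_eq_prod, ← Measure.prod_restrict, Measure.restrict_univ] at hmp

lemma integrable_comp_smul_add_orthogonal (hν : ‖ν‖ = 1) {f : E → ℝ}
    (hf : IntegrableOn f (halfSpace ν)) :
    Integrable (fun p : ℝ × (ℝ ∙ ν)ᗮ => f (p.1 • ν + p.2))
      ((volume.restrict (Set.Ioi 0)).prod volume) :=
  (measurePreserving_restrict_halfSpace hν).integrable_comp_of_integrable hf

lemma setIntegral_halfSpace_eq_integral_prod (hν : ‖ν‖ = 1) {f : E → ℝ}
    (hf : IntegrableOn f (halfSpace ν)) :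
    ∫ y in halfSpace ν, f y
      = ∫ p : ℝ × (ℝ ∙ ν)ᗮ, f (p.1 • ν + p.2) ∂(volume.restrict (Set.Ioi 0)).prod volume := by
  have hmp := measurePreserving_restrict_halfSpace hν
  rw [IntegrableOn, ← hmp.map_eq] at hf
  rw [← hmp.map_eq, integral_map hmp.aemeasurable hf.aestronglyMeasurable]

section Fderiv

variable {X : E → ℝ} (hX : ContDiff ℝ 1 X) (hsupp : HasCompactSupport X)
include hX hsupp

lemma integrable_fderiv_apply (v : E) : Integrable fun y => fderiv ℝ X y v :=
  ((hX.continuous_fderiv one_ne_zero).clm_apply continuous_const).integrable_of_hasCompactSupport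
    (hsupp.fderiv_apply ℝ v)

lemma integral_fderiv_eq_zero (v : E) : ∫ y, fderiv ℝ X y v = 0 := by
  have hparts := integral_mul_fderiv_eq_neg_fderiv_mul_of_integrable (μ := volume) (v := v)
    (f := fun _ : E => (1 : ℝ)) (g := X)
  simpa using hparts (by simp) (by simpa using integrable_fderiv_apply hX hsupp v)
    (by simpa using hX.continuous.integrable_of_hasCompactSupport hsupp) (by simp)
    (fun x _ => hX.differentiable one_ne_zero x)

lemma setIntegral_halfSpace_fderiv_normal (hν : ‖ν‖ = 1) :
    ∫ y in halfSpace ν, fderiv ℝ X y ν = -∫ z : (ℝ ∙ ν)ᗮ, X z := by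
  have hint := (integrable_fderiv_apply hX hsupp ν).integrableOn (s := halfSpace ν)
  rw [setIntegral_halfSpace_eq_integral_prod hν hint,
    integral_prod_symm _ (integrable_comp_smul_add_orthogonal hν hint), ← integral_neg]
  congr! 2 with z
  have hline : Isometry fun r : ℝ => r • ν + (z : E) := fun r s => by
    simp [edist_dist, dist_eq_norm, ← sub_smul, norm_smul, hν]
  have hderiv (r : ℝ) : deriv (fun r : ℝ => X (r • ν + z)) r = fderiv ℝ X (r • ν + z) ν := by
    have h := ((hasDerivAt_id r).smul_const ν).add_const (z : E)
    rw [one_smul] at h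
    exact ((hX.differentiable one_ne_zero _).hasFDerivAt.comp_hasDerivAt r h).deriv
  simp_rw [← hderiv]
  have hline_supp : HasCompactSupport fun r : ℝ => X (r • ν + z) :=
    hsupp.comp_isClosedEmbedding hline.isClosedEmbedding
  rw [hline_supp.integral_Ioi_deriv_eq (by fun_prop), zero_smul, zero_add]

lemma setIntegral_halfSpace_fderiv_tangential (hν : ‖ν‖ = 1) (w : (ℝ ∙ ν)ᗮ) :
    ∫ y in halfSpace ν, fderiv ℝ X y w = 0 := by
  have hint := (integrable_fderiv_apply hX hsupp w).integrableOn (s := halfSpace ν)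
  rw [setIntegral_halfSpace_eq_integral_prod hν hint,
    integral_prod _ (integrable_comp_smul_add_orthogonal hν hint)]
  refine (integral_congr_ae (.of_forall fun r => ?_)).trans (integral_zero _ _)
  have hslice : Isometry fun z : (ℝ ∙ ν)ᗮ => r • ν + (z : E) := fun y z => by
    simp [edist_dist, dist_eq_norm]
  have hfderiv (z : (ℝ ∙ ν)ᗮ) :
      fderiv ℝ (fun z : (ℝ ∙ ν)ᗮ => X (r • ν + z)) z w = fderiv ℝ X (r • ν + z) w := by
    have h := ((ℝ ∙ ν)ᗮ.subtypeL.hasFDerivAt (x := z)).const_add (r • ν)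
    exact congrArg (· w) ((hX.differentiable one_ne_zero _).hasFDerivAt.comp z h).fderiv
  simp_rw [← hfderiv]
  have hsmooth : ContDiff ℝ 1 fun z : (ℝ ∙ ν)ᗮ => r • ν + (z : E) :=
    contDiff_const.add (ℝ ∙ ν)ᗮ.subtypeL.contDiff
  exact integral_fderiv_eq_zero (hX.comp hsmooth)
    (hsupp.comp_isClosedEmbedding hslice.isClosedEmbedding) w

lemma setIntegral_halfSpace_fderiv (hν : ‖ν‖ = 1) (v : E) :
    ∫ y in halfSpace ν, fderiv ℝ X y v = -(⟪ν, v⟫ * ∫ z : (ℝ ∙ ν)ᗮ, X z) := by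
  have hw : v - ⟪ν, v⟫ • ν ∈ (ℝ ∙ ν)ᗮ := by
    rw [Submodule.mem_orthogonal_singleton_iff_inner_right, inner_sub_right, real_inner_smul_right,
      real_inner_self_eq_norm_sq, hν]
    ring
  have hsplit (y : E) : fderiv ℝ X y v
      = ⟪ν, v⟫ * fderiv ℝ X y ν + fderiv ℝ X y (v - ⟪ν, v⟫ • ν) := by simp
  simp_rw [hsplit]
  rw [integral_add ((integrable_fderiv_apply hX hsupp ν).const_mul _).integrableOn
    (integrable_fderiv_apply hX hsupp _).integrableOn, integral_const_mul,
    setIntegral_halfSpace_fderiv_normal hX hsupp hν,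
    setIntegral_halfSpace_fderiv_tangential hX hsupp hν ⟨_, hw⟩]
  ring

end Fderiv

lemma integrable_comp_subtype {X : E → ℝ} (hX : Continuous X) (hsupp : HasCompactSupport X)
    (S : Submodule ℝ E) : Integrable fun z : S => X z :=
  (hX.comp continuous_subtype_val).integrable_of_hasCompactSupport
    (hsupp.comp_isClosedEmbedding S.closed_of_finiteDimensional.isClosedEmbedding_subtypeVal)

lemma setIntegral_halfSpace_sum_fderiv (hν : ‖ν‖ = 1) {ι : Type*} [Fintype ι] (v : ι → E)
    {X : ι → E → ℝ} (hX : ∀ i, ContDiff ℝ 1 (X i)) (hsupp : ∀ i, HasCompactSupport (X i)) :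
    ∫ y in halfSpace ν, ∑ i, fderiv ℝ (X i) y (v i)
      = -∫ z : (ℝ ∙ ν)ᗮ, ∑ i, ⟪ν, v i⟫ * X i z := by
  have hplane (i : ι) := integrable_comp_subtype (hX i).continuous (hsupp i) (ℝ ∙ ν)ᗮ
  rw [integral_finsetSum _ fun i _ => (integrable_fderiv_apply (hX i) (hsupp i) _).integrableOn,
    integral_finsetSum _ fun i _ => (hplane i).const_mul _, ← Finset.sum_neg_distrib]
  simp_rw [setIntegral_halfSpace_fderiv (hX _) (hsupp _) hν, integral_const_mul]

theorem setIntegral_halfSpace_divergence (hν : ‖ν‖ = 1) {Y : E → E} (hY : ContDiff ℝ 1 Y)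
    (hsupp : HasCompactSupport Y) :
    ∫ y in halfSpace ν, divergence Y y = -∫ z : (ℝ ∙ ν)ᗮ, ⟪ν, Y z⟫ := by
  set b := stdOrthonormalBasis ℝ E
  have hfderiv (i) (y : E) :
      ⟪b i, fderiv ℝ Y y (b i)⟫ = fderiv ℝ (fun y => ⟪b i, Y y⟫) y (b i) := by
    rw [fderiv_inner_apply _ (differentiableAt_const _) (hY.differentiable one_ne_zero y)]
    simp
  simp_rw [divergence_eq_sum_inner b, hfderiv]
  rw [setIntegral_halfSpace_sum_fderiv hν b (fun i => contDiff_const.inner ℝ hY)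
    fun i => hsupp.comp_left (g := fun w => ⟪b i, w⟫) (inner_zero_right _)]
  simp_rw [b.sum_inner_mul_inner]

theorem setIntegral_halfSpace_green (hν : ‖ν‖ = 1) {u Ψ : E → F} (hu : ContDiff ℝ 2 u)
    (hΨ : ContDiff ℝ 2 Ψ) (hsupp : HasCompactSupport Ψ) (hΨ0 : ∀ z : (ℝ ∙ ν)ᗮ, Ψ z = 0) :
    ∫ y in halfSpace ν, (⟪u y, Δ Ψ y⟫ - ⟪Δ u y, Ψ y⟫)
      = -∫ z : (ℝ ∙ ν)ᗮ, ⟪u z, fderiv ℝ Ψ z ν⟫ := by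
  set b := stdOrthonormalBasis ℝ E
  have hX (v : E) : ContDiff ℝ 1 fun y => ⟪u y, fderiv ℝ Ψ y v⟫ - ⟪fderiv ℝ u y v, Ψ y⟫ :=
    ((hu.of_le one_le_two).inner ℝ ((hΨ.fderiv_right le_rfl).clm_apply contDiff_const)).sub
      (((hu.fderiv_right le_rfl).clm_apply contDiff_const).inner ℝ (hΨ.of_le one_le_two))
  have hXsupp (v : E) :
      HasCompactSupport fun y => ⟪u y, fderiv ℝ Ψ y v⟫ - ⟪fderiv ℝ u y v, Ψ y⟫ := by
    refine hsupp.mono' fun y hy => ?_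
    contrapose! hy
    simp [fderiv_of_notMem_tsupport ℝ hy, image_eq_zero_of_notMem_tsupport hy]
  simp_rw [inner_laplacian_sub_eq_sum_fderiv hu.contDiffAt hΨ.contDiffAt b]
  rw [setIntegral_halfSpace_sum_fderiv hν b (fun i => hX (b i)) fun i => hXsupp (b i)]
  simp_rw [hΨ0, inner_zero_right, sub_zero, ← real_inner_smul_right, ← inner_sum, ← map_smul,
    ← map_sum, real_inner_comm _ ν, ← b.repr_apply_apply, b.sum_repr]

end HalfSpace

section RadialField

variable {E : Type*} [NormedAddCommGroup E] [InnerProductSpace ℝ E]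

/-- The radial vector field with profile `g`, a function of the *squared* distance to the origin. -/
def radialField (g : ℝ → ℝ) (z : E) : E := g (‖z‖ ^ 2) • z

lemma contDiff_radialField {g : ℝ → ℝ} {k : WithTop ℕ∞} (hg : ContDiff ℝ k g) :
    ContDiff ℝ k (radialField g : E → E) :=
  (hg.comp (contDiff_norm_sq ℝ)).smul contDiff_id

lemma fderiv_radialField_apply {g : ℝ → ℝ} {z : E} (hg : DifferentiableAt ℝ g (‖z‖ ^ 2)) (h : E) :
    fderiv ℝ (radialField g) z h
      = g (‖z‖ ^ 2) • h + (2 * deriv g (‖z‖ ^ 2) * ⟪z, h⟫) • z := by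
  have hsmul : HasFDerivAt (radialField g) _ z :=
    (hasFDerivAt_comp_norm_sq hg).fun_smul (hasFDerivAt_id z)
  rw [hsmul.fderiv]
  simp

variable [FiniteDimensional ℝ E]

lemma divergence_radialField {g : ℝ → ℝ} {z : E} (hg : DifferentiableAt ℝ g (‖z‖ ^ 2)) :
    divergence (radialField g) z
      = finrank ℝ E * g (‖z‖ ^ 2) + 2 * ‖z‖ ^ 2 * deriv g (‖z‖ ^ 2) := by
  have hid : divergence (fun y : E => y) z = finrank ℝ E := by simp [divergence]
  have hsmul := divergence_smul (hasFDerivAt_comp_norm_sq hg).differentiableAt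
    differentiableAt_fun_id
  rw [gradient_comp_norm_sq hg, hid, real_inner_smul_right, real_inner_self_eq_norm_sq] at hsmul
  exact hsmul.trans (by ring)

lemma laplacian_radialField {g : ℝ → ℝ} (hg : ContDiff ℝ 2 g) (z : E) :
    Δ (radialField g : E → E) z = ∇ (divergence (radialField g)) z := by
  set q := ‖z‖ ^ 2
  have hlap : Δ (radialField g : E → E) z
      = (4 * deriv g q + (4 * q * deriv (deriv g) q + 2 * finrank ℝ E * deriv g q)) • z := by
    have hφ : ContDiffAt ℝ 2 (fun y : E => g (‖y‖ ^ 2)) z :=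
      (hg.comp (contDiff_norm_sq ℝ)).contDiffAt
    have hid : Δ (fun y : E => y) z = 0 := by
      rw [laplacian_eq_sum_fderiv contDiffAt_fun_id (stdOrthonormalBasis ℝ E)]
      simp
    have hsmul := laplacian_smul_fun hφ contDiffAt_fun_id
    rw [hid, gradient_comp_norm_sq (hg.differentiable two_ne_zero _),
      laplacian_comp_norm_sq hg.contDiffAt] at hsmul
    refine hsmul.trans ?_
    simp only [fderiv_fun_id, ContinuousLinearMap.id_apply, smul_zero, zero_add]
    module
  have hg' : DifferentiableAt ℝ (deriv g) q := differentiableAt_fderiv_apply hg.contDiffAt 1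
  have hcharge : HasDerivAt (fun q => finrank ℝ E * g q + 2 * q * deriv g q)
      (finrank ℝ E * deriv g q + (2 * deriv g q + 2 * q * deriv (deriv g) q)) q := by
    have hlin : HasDerivAt (fun q : ℝ => 2 * q) 2 q := by
      simpa using (hasDerivAt_id q).const_mul 2
    exact ((hg.differentiable two_ne_zero q).hasDerivAt.const_mul _).add
      (hlin.mul hg'.hasDerivAt)
  have hdiv : divergence (radialField g)
      = fun z : E => finrank ℝ E * g (‖z‖ ^ 2) + 2 * ‖z‖ ^ 2 * deriv g (‖z‖ ^ 2) :=
    funext fun z => divergence_radialField (hg.differentiable two_ne_zero _)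
  rw [hlap, hdiv, gradient_comp_norm_sq hcharge.differentiableAt, hcharge.deriv]
  module

end RadialField

section RegularizedPower

/-- `g` is a smooth profile on `ℝ` that agrees with `q ↦ q ^ (-n / 2)` on `[a, ∞)` and whose radial
field on an `n`-dimensional space has nonnegative divergence: `radialField g` is then the
electrostatic field of a unit charge spread over the ball of squared radius `a`. -/
structure IsRegularizedPower (n : ℕ) (a : ℝ) (g : ℝ → ℝ) : Prop where
  contDiff : ContDiff ℝ ∞ g
  eq_rpow : ∀ q, a ≤ q → g q = q ^ (-(n : ℝ) / 2)
  charge_nonneg : ∀ q, 0 ≤ q → 0 ≤ n * g q + 2 * q * deriv g q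

lemma exists_isRegularizedPower (n : ℕ) {a : ℝ} (ha : 0 < a) : ∃ g, IsRegularizedPower n a g := by
  set κ : ℝ → ℝ := fun q => smoothTransition (2 * q / a - 1)
  have hκ : ContDiff ℝ ∞ κ := (smoothTransition.contDiff (n := ⊤)).comp (by fun_prop)
  have hκ_mono : Monotone κ := fun x y hxy => smoothTransition.monotone (by gcongr)
  have hκ_zero (q : ℝ) (hq : q ≤ a / 2) : κ q = 0 :=
    smoothTransition.zero_of_nonpos (by rw [sub_nonpos, div_le_one ha]; linarith)
  have hκ_one (q : ℝ) (hq : a ≤ q) : κ q = 1 :=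
    smoothTransition.one_of_one_le (by rw [le_sub_iff_add_le, le_div_iff₀ ha]; linarith)
  have hzero (q : ℝ) (hq : q < a / 2) : (fun q => κ q * q ^ (-(n : ℝ) / 2)) =ᶠ[𝓝 q] fun _ => 0 := by
    filter_upwards [Iio_mem_nhds hq] with r hr
    rw [hκ_zero r (le_of_lt hr), zero_mul]
  refine ⟨fun q => κ q * q ^ (-(n : ℝ) / 2), ?_, fun q hq => by simp [hκ_one q hq], fun q _ => ?_⟩
  · refine contDiff_iff_contDiffAt.2 fun q => ?_
    rcases lt_or_ge q (a / 2) with hq | hq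
    · exact contDiffAt_const.congr_of_eventuallyEq (hzero q hq)
    · exact hκ.contDiffAt.mul (contDiffAt_rpow_const_of_ne (by linarith))
  · rcases lt_or_ge q (a / 2) with hq | hq
    · simp [(hzero q hq).deriv_eq, hκ_zero q hq.le]
    · have hq0 : 0 < q := by linarith
      have hderiv := ((hκ.differentiable (by simp) q).hasDerivAt).fun_mul
        (hasDerivAt_rpow_const (p := -(n : ℝ) / 2) (Or.inl hq0.ne'))
      have hcharge : n * (κ q * q ^ (-(n : ℝ) / 2))
            + 2 * q * deriv (fun q => κ q * q ^ (-(n : ℝ) / 2)) q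
          = 2 * q * deriv κ q * q ^ (-(n : ℝ) / 2) := by
        rw [hderiv.deriv, rpow_sub hq0, rpow_one]
        field_simp
        ring
      have := hκ_mono.deriv_nonneg (x := q)
      rw [hcharge]
      positivity

namespace IsRegularizedPower

variable {n : ℕ} {a : ℝ} {g : ℝ → ℝ} (hg : IsRegularizedPower n a g)
include hg

lemma contDiff_two : ContDiff ℝ 2 g := contDiff_infty.1 hg.contDiff 2

lemma differentiable : Differentiable ℝ g := hg.contDiff_two.differentiable two_ne_zero

lemma deriv_eq (ha : 0 < a) {q : ℝ} (hq : a < q) :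
    deriv g q = -n / 2 * (q ^ (-(n : ℝ) / 2) / q) := by
  have hq0 := ha.trans hq
  have heq : g =ᶠ[𝓝 q] fun q => q ^ (-(n : ℝ) / 2) := by
    filter_upwards [Ioi_mem_nhds hq] with r hr using hg.eq_rpow r (le_of_lt hr)
  rw [heq.deriv_eq, (hasDerivAt_rpow_const (Or.inl hq0.ne')).deriv, rpow_sub hq0, rpow_one]

lemma charge_eq_zero (ha : 0 < a) {q : ℝ} (hq : a < q) : n * g q + 2 * q * deriv g q = 0 := by
  have hq0 := ha.trans hq
  rw [hg.deriv_eq ha hq, hg.eq_rpow q hq.le]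
  field_simp
  ring

lemma integral_Ioi_pow_mul_charge (hn : n ≠ 0) :
    ∫ r in Set.Ioi (0 : ℝ), r ^ (n - 1) * (n * g (r ^ 2) + 2 * r ^ 2 * deriv g (r ^ 2)) = 1 := by
  have hderiv (r : ℝ) : HasDerivAt (fun r => r ^ n * g (r ^ 2))
      (r ^ (n - 1) * (n * g (r ^ 2) + 2 * r ^ 2 * deriv g (r ^ 2))) r := by
    have hsq : HasDerivAt (fun r : ℝ => r ^ 2) (2 * r) r := by simpa using hasDerivAt_pow 2 r
    refine ((hasDerivAt_pow n r).mul
      ((hg.differentiable _).hasDerivAt.comp (h₂ := g) r hsq)).congr_deriv ?_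
    rw [Function.comp_apply, ← mul_pow_sub_one hn r]
    ring
  have htendsto : Tendsto (fun r => r ^ n * g (r ^ 2)) atTop (𝓝 1) := by
    refine tendsto_const_nhds.congr' ?_
    filter_upwards [eventually_gt_atTop 0, eventually_ge_atTop a, eventually_ge_atTop 1] with
      r hr har hr1
    rw [hg.eq_rpow _ (by nlinarith), ← rpow_natCast r n, ← rpow_natCast r 2, ← rpow_mul hr.le,
      ← rpow_add hr]
    simp [mul_div_cancel₀]
  rw [integral_Ioi_of_hasDerivAt_of_nonneg (hderiv 0).continuousAt.continuousWithinAt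
    (fun r _ => hderiv r) (fun r hr => mul_nonneg (pow_nonneg (le_of_lt hr) _)
      (hg.charge_nonneg _ (sq_nonneg r))) htendsto]
  simp [hn]

end IsRegularizedPower

end RegularizedPower

section Charge

variable (E : Type*) [NormedAddCommGroup E] [InnerProductSpace ℝ E] [FiniteDimensional ℝ E]
  [MeasurableSpace E] [BorelSpace E] [Nontrivial E]

lemma sphereArea_finrank :
    sphereArea (finrank ℝ E) = finrank ℝ E * volume.real (ball (0 : E) 1) := by
  have hn : (0 : ℝ) < finrank ℝ E := by exact_mod_cast Module.finrank_pos
  have : 0 < Gamma ((finrank ℝ E : ℝ) / 2) := Gamma_pos_of_pos (by positivity)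
  have hpow : √π ^ finrank ℝ E = π ^ ((finrank ℝ E : ℝ) / 2) := by
    rw [sqrt_eq_rpow, ← rpow_natCast, ← rpow_mul pi_pos.le]
    ring_nf
  rw [measureReal_def, InnerProductSpace.volume_ball, Gamma_add_one (by positivity), hpow,
    sphereArea, ENNReal.ofReal_one, one_pow, one_mul, ENNReal.toReal_ofReal (by positivity)]
  field_simp

lemma sphereArea_pos {n : ℕ} (hn : n ≠ 0) : 0 < sphereArea n := by
  have : 0 < Gamma ((n : ℝ) / 2) := Gamma_pos_of_pos (by positivity)
  unfold sphereArea
  positivity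

variable {E}

lemma integral_fun_norm (f : ℝ → ℝ) :
    ∫ y : E, f ‖y‖ = sphereArea (finrank ℝ E)
      * ∫ r in Set.Ioi (0 : ℝ), r ^ (finrank ℝ E - 1) * f r := by
  rw [integral_fun_norm_addHaar, sphereArea_finrank]
  simp [mul_assoc]

lemma integral_divergence_radialField {a : ℝ} {g : ℝ → ℝ}
    (hg : IsRegularizedPower (finrank ℝ E) a g) :
    ∫ z : E, divergence (radialField g) z = sphereArea (finrank ℝ E) := by
  simp_rw [divergence_radialField (hg.differentiable _)]
  rw [integral_fun_norm fun r => finrank ℝ E * g (r ^ 2) + 2 * r ^ 2 * deriv g (r ^ 2),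
    hg.integral_Ioi_pow_mul_charge Module.finrank_pos.ne', mul_one]

end Charge

section BoundaryKernel

/-- The norm of the normal derivative of the field `‖z‖ ^ (-n) • z` of a unit charge at distance `1`
from a hyperplane, at a point of the hyperplane whose squared distance to the foot of the
perpendicular is `q`. -/
def boundaryKernel (n : ℕ) (q : ℝ) : ℝ :=
  (1 + q) ^ (-(n : ℝ) / 2) * √(1 + n * (n - 2) / (1 + q))

lemma boundaryKernel_nonneg (n : ℕ) {q : ℝ} (hq : 0 ≤ q) : 0 ≤ boundaryKernel n q := by
  unfold boundaryKernel
  positivity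

lemma boundaryKernel_tan_sq (n : ℕ) {θ : ℝ} (hθ : 0 < cos θ) :
    boundaryKernel n (tan θ ^ 2) = cos θ ^ n * √(1 + n * (n - 2) * cos θ ^ 2) := by
  have htan : 1 + tan θ ^ 2 = (cos θ ^ 2)⁻¹ := by rw [← inv_one_add_tan_sq hθ.ne', inv_inv]
  have hpow : ((cos θ ^ 2)⁻¹) ^ (-(n : ℝ) / 2) = cos θ ^ n := by
    rw [inv_rpow (by positivity), ← rpow_neg (by positivity), ← rpow_natCast (cos θ) 2,
      ← rpow_mul hθ.le, ← rpow_natCast]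
    congr 1
    push_cast
    ring
  rw [boundaryKernel, htan, hpow, div_inv_eq_mul]

lemma image_tan_Ioo_zero_pi_div_two : tan '' Set.Ioo 0 (π / 2) = Set.Ioi 0 := by
  refine Set.Subset.antisymm ?_ fun x hx => ?_
  · rintro _ ⟨θ, hθ, rfl⟩
    exact tan_pos_of_pos_of_lt_pi_div_two hθ.1 hθ.2
  · exact ⟨arctan x, ⟨arctan_pos.2 hx, arctan_lt_pi_div_two x⟩, tan_arctan x⟩

lemma integral_Ioi_pow_mul_boundaryKernel (k : ℕ) :
    ∫ r in Set.Ioi (0 : ℝ), r ^ k * boundaryKernel (k + 2) (r ^ 2)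
      = ∫ θ in (0 : ℝ)..(π / 2),
        √(1 + (k + 2 : ℕ) * ((k + 2 : ℕ) - 2) * cos θ ^ 2) * sin θ ^ k := by
  have hcos {θ : ℝ} (hθ : θ ∈ Set.Ioo 0 (π / 2)) : 0 < cos θ :=
    cos_pos_of_mem_Ioo ⟨by linarith [hθ.1, pi_pos], hθ.2⟩
  rw [← image_tan_Ioo_zero_pi_div_two, integral_image_eq_integral_abs_deriv_smul measurableSet_Ioo
      (fun θ hθ => (hasDerivAt_tan (hcos hθ).ne').hasDerivWithinAt)
      (injOn_tan.mono (Set.Ioo_subset_Ioo_left (by linarith [pi_pos]))),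
    intervalIntegral.integral_of_le (by positivity), integral_Ioc_eq_integral_Ioo]
  refine setIntegral_congr_fun measurableSet_Ioo fun θ hθ => ?_
  have hθ := hcos hθ
  simp only [smul_eq_mul]
  rw [boundaryKernel_tan_sq _ hθ, tan_eq_sin_div_cos, abs_of_pos (by positivity), div_pow]
  field_simp
  ring

variable {P : Type*} [NormedAddCommGroup P] [InnerProductSpace ℝ P] [FiniteDimensional ℝ P]
  [MeasurableSpace P] [BorelSpace P] [Nontrivial P]

lemma two_mul_integral_boundaryKernel :
    2 * ∫ z : P, boundaryKernel (finrank ℝ P + 1) (‖z‖ ^ 2)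
      = sphereArea (finrank ℝ P + 1) * Dconst (finrank ℝ P + 1) := by
  obtain ⟨k, hk⟩ : ∃ k, finrank ℝ P = k + 1 := Nat.exists_eq_succ_of_ne_zero Module.finrank_pos.ne'
  have hpos := sphereArea_pos (n := k + 2) (by simp)
  rw [integral_fun_norm fun r => boundaryKernel (finrank ℝ P + 1) (r ^ 2), hk, Dconst]
  simp only [Nat.add_sub_cancel, integral_Ioi_pow_mul_boundaryKernel]
  field_simp
  rfl

lemma integrable_boundaryKernel :
    Integrable fun z : P => boundaryKernel (finrank ℝ P + 1) (‖z‖ ^ 2) := by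
  set n := finrank ℝ P + 1
  have hn : (0 : ℝ) ≤ n * (n - 2) := by
    have : (2 : ℝ) ≤ n := by exact_mod_cast Nat.succ_le_succ (Module.finrank_pos (R := ℝ) (M := P))
    exact mul_nonneg (by linarith) (by linarith)
  have hdecay : Integrable fun z : P => (1 + ‖z‖ ^ 2) ^ (-(n : ℝ) / 2) :=
    integrable_rpow_neg_one_add_norm_sq (by simp [n])
  refine (hdecay.mul_const √(1 + n * (n - 2))).mono' ?_ (.of_forall fun z => ?_)
  · unfold boundaryKernel
    exact (by fun_prop : Measurable _).aestronglyMeasurable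
  · rw [norm_of_nonneg (boundaryKernel_nonneg n (by positivity)), boundaryKernel]
    gcongr
    exact div_le_self hn (by nlinarith [sq_nonneg ‖z‖])

end BoundaryKernel

section Reflection

variable {E F : Type*} [NormedAddCommGroup E] [InnerProductSpace ℝ E] [NormedAddCommGroup F]
  [InnerProductSpace ℝ F] {ν : E}

lemma fderiv_comp_reflection_sub {f : E → F} (z : (ℝ ∙ ν)ᗮ) (hf : DifferentiableAt ℝ f z) :
    fderiv ℝ (fun y => f ((ℝ ∙ ν)ᗮ.reflection y) - f y) z ν = -((2 : ℝ) • fderiv ℝ f z ν) := by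
  set L := (ℝ ∙ ν)ᗮ.reflection
  have hz : L z = z := Submodule.reflection_mem_subspace_eq_self z.2
  have hcomp : HasFDerivAt (fun y => f (L y)) _ (z : E) :=
    HasFDerivAt.comp (z : E) (hz.symm ▸ hf.hasFDerivAt)
      L.toContinuousLinearEquiv.toContinuousLinearMap.hasFDerivAt
  rw [(hcomp.fun_sub hf.hasFDerivAt).fderiv]
  have hLν : L ν = -ν := Submodule.reflection_orthogonalComplement_singleton_eq_neg ν
  simp [hz, hLν, two_smul, sub_eq_add_neg]

variable [FiniteDimensional ℝ E] [MeasurableSpace E] [BorelSpace E]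

theorem setIntegral_halfSpace_green_reflection (hν : ‖ν‖ = 1) {u f : E → F} (hu : ContDiff ℝ 2 u)
    (hf : ContDiff ℝ 2 f) (hsupp : HasCompactSupport f) :
    ∫ y in halfSpace ν, (⟪u y, Δ f ((ℝ ∙ ν)ᗮ.reflection y) - Δ f y⟫
        - ⟪Δ u y, f ((ℝ ∙ ν)ᗮ.reflection y) - f y⟫)
      = 2 * ∫ z : (ℝ ∙ ν)ᗮ, ⟪u z, fderiv ℝ f z ν⟫ := by
  set L := (ℝ ∙ ν)ᗮ.reflection
  have hfL : ContDiff ℝ 2 fun y => f (L y) := hf.comp L.contDiff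
  have hlap (y : E) : Δ (fun y => f (L y) - f y) y = Δ f (L y) - Δ f y := by
    rw [← laplacian_comp_linearIsometryEquiv hf]
    exact hfL.contDiffAt.laplacian_sub hf.contDiffAt
  have hodd (z : (ℝ ∙ ν)ᗮ) : f (L z) - f z = 0 := by
    rw [Submodule.reflection_mem_subspace_eq_self z.2, sub_self]
  have hgreen := setIntegral_halfSpace_green hν hu (hfL.sub hf)
    ((hsupp.comp_homeomorph L.toHomeomorph).sub hsupp) hodd
  simp_rw [hlap, L, fderiv_comp_reflection_sub _ (hf.differentiable two_ne_zero _), inner_neg_right,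
    integral_neg, neg_neg, real_inner_smul_right, integral_const_mul] at hgreen
  exact hgreen

end Reflection

section IntegrationByParts

variable {E : Type*} [NormedAddCommGroup E] [InnerProductSpace ℝ E] [FiniteDimensional ℝ E]
  [MeasurableSpace E] [BorelSpace E] {ν : E}

lemma integrable_inner_of_hasCompactSupport {u w : E → E} (hu : Continuous u) (hw : Continuous w)
    (hsupp : HasCompactSupport w) : Integrable fun y => ⟪u y, w y⟫ :=
  (hu.inner hw).integrable_of_hasCompactSupport <| hsupp.mono fun y hy hw0 => hy (by simp [hw0])

lemma setIntegral_halfSpace_mul_divergence (hν : ‖ν‖ = 1) {φ : E → ℝ} {u : E → E}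
    (hφ : ContDiff ℝ 1 φ) (hu : ContDiff ℝ 1 u) (hsupp : HasCompactSupport φ)
    (hφ0 : ∀ z : (ℝ ∙ ν)ᗮ, φ z = 0) :
    ∫ y in halfSpace ν, φ y * divergence u y = -∫ y in halfSpace ν, ⟪u y, ∇ φ y⟫ := by
  have hgrad : Continuous (∇ φ) := by
    unfold gradient
    exact (LinearIsometryEquiv.continuous _).comp (hφ.continuous_fderiv one_ne_zero)
  have hgrad_int : Integrable fun y => ⟪u y, ∇ φ y⟫ :=
    integrable_inner_of_hasCompactSupport hu.continuous hgrad <|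
      (hsupp.fderiv ℝ).comp_left (map_zero _)
  have hdiv_int : Integrable fun y => φ y * divergence u y :=
    (hφ.continuous.mul
      (contDiff_divergence (m := 0) hu).continuous).integrable_of_hasCompactSupport hsupp.mul_right
  have hzero := setIntegral_halfSpace_divergence hν (hφ.smul hu) hsupp.smul_right
  simp_rw [Pi.smul_apply', hφ0, zero_smul, inner_zero_right, integral_zero, neg_zero] at hzero
  rw [eq_neg_iff_add_eq_zero, ← hzero, ← integral_add hdiv_int.integrableOn hgrad_int.integrableOn]
  refine integral_congr_ae (.of_forall fun y => ?_)
  exact (add_comm _ _).trans (divergence_smul (hφ.differentiable one_ne_zero y)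
    (hu.differentiable one_ne_zero y)).symm

end IntegrationByParts

section ChargeSupport

variable {E : Type*} [NormedAddCommGroup E] [InnerProductSpace ℝ E]

lemma norm_fderiv_radialField_sub_normal {n : ℕ} {a : ℝ} {g : ℝ → ℝ}
    (hg : IsRegularizedPower n a g) (ha : 0 < a) (ha1 : a < 1) {ν : E} (hν : ‖ν‖ = 1)
    (z : (ℝ ∙ ν)ᗮ) :
    ‖fderiv ℝ (radialField g) ((z : E) - ν) ν‖ = boundaryKernel n (‖z‖ ^ 2) := by
  set q := ‖z‖ ^ 2
  have hq : 0 < 1 + q := by positivity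
  have hinner : ⟪(z : E) - ν, ν⟫ = -1 := by
    rw [inner_sub_left, Submodule.mem_orthogonal_singleton_iff_inner_left.1 z.2,
      real_inner_self_eq_norm_sq, hν]
    norm_num
  have hnorm : ‖(z : E) - ν‖ ^ 2 = 1 + q := norm_sub_sq_of_mem_orthogonal hν z
  have hfderiv : fderiv ℝ (radialField g) ((z : E) - ν) ν
      = (1 + q) ^ (-(n : ℝ) / 2) • (ν + (n / (1 + q)) • ((z : E) - ν)) := by
    rw [fderiv_radialField_apply (hg.differentiable _), hnorm, hinner,
      hg.deriv_eq ha (by linarith [sq_nonneg ‖z‖]), hg.eq_rpow _ (by linarith [sq_nonneg ‖z‖])]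
    module
  have hsq : ‖ν + (n / (1 + q)) • ((z : E) - ν)‖ ^ 2 = 1 + n * (n - 2) / (1 + q) := by
    rw [norm_add_sq_real, norm_smul, mul_pow, hnorm, hν, real_inner_smul_right, real_inner_comm,
      hinner, norm_eq_abs, sq_abs]
    field_simp
    ring
  rw [hfderiv, norm_smul, norm_of_nonneg (by positivity), boundaryKernel, ← hsq,
    sqrt_sq (norm_nonneg _)]

variable [FiniteDimensional ℝ E] {a : ℝ} {g : ℝ → ℝ}
  (hg : IsRegularizedPower (finrank ℝ E) a g) (ha : 0 < a)
include hg

lemma contDiff_divergence_radialField : ContDiff ℝ ∞ (divergence (radialField g : E → E)) :=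
  contDiff_divergence (contDiff_radialField (by simpa using hg.contDiff))

lemma divergence_radialField_nonneg (z : E) : 0 ≤ divergence (radialField g) z := by
  rw [divergence_radialField (hg.differentiable _)]
  exact hg.charge_nonneg _ (sq_nonneg _)

include ha

lemma divergence_radialField_eq_zero {z : E} (hz : a < ‖z‖ ^ 2) :
    divergence (radialField g) z = 0 := by
  rw [divergence_radialField (hg.differentiable _), hg.charge_eq_zero ha hz]

lemma laplacian_radialField_eq_zero {z : E} (hz : a < ‖z‖ ^ 2) :
    Δ (radialField g : E → E) z = 0 := by
  have hnear : divergence (radialField g) =ᶠ[𝓝 z] fun _ => 0 := by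
    filter_upwards [(continuous_norm.pow 2).continuousAt.eventually_mem (Ioi_mem_nhds hz)]
      with y hy using divergence_radialField_eq_zero hg ha hy
  simp [laplacian_radialField hg.contDiff_two, gradient, hnear.fderiv_eq]

lemma hasCompactSupport_divergence_radialField :
    HasCompactSupport (divergence (radialField g : E → E)) :=
  .intro (isCompact_closedBall 0 √a) fun z hz =>
    divergence_radialField_eq_zero hg ha <| lt_sq_of_sqrt_lt <| by simpa using hz

lemma hasCompactSupport_laplacian_radialField :
    HasCompactSupport (Δ (radialField g : E → E)) :=
  .intro (isCompact_closedBall 0 √a) fun z hz =>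
    laplacian_radialField_eq_zero hg ha <| lt_sq_of_sqrt_lt <| by simpa using hz

end ChargeSupport

section ScreenedField

variable {E : Type*} [NormedAddCommGroup E] [InnerProductSpace ℝ E]

/-- The field of a unit charge with radial profile `g`, screened by the opposite charge with radial
profile `G` dilated by the factor `s⁻¹`. When both profiles regularize `q ↦ q ^ (-n / 2)`, the two
fields cancel far away. -/
def screenedField (g G : ℝ → ℝ) (s : ℝ) (z : E) : E :=
  radialField g z - s ^ (finrank ℝ E - 1) • radialField G (s • z)

variable {g G : ℝ → ℝ}

lemma contDiff_screenedField {k : WithTop ℕ∞} (hg : ContDiff ℝ k g) (hG : ContDiff ℝ k G) (s : ℝ) :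
    ContDiff ℝ k (screenedField g G s : E → E) :=
  (contDiff_radialField hg).sub
    (((contDiff_radialField hG).comp (contDiff_const_smul s)).const_smul _)

lemma fderiv_screenedField (hg : ContDiff ℝ 1 g) (hG : ContDiff ℝ 1 G) (s : ℝ) (z : E) :
    fderiv ℝ (screenedField g G s) z
      = fderiv ℝ (radialField g) z
        - (s ^ (finrank ℝ E - 1) * s) • fderiv ℝ (radialField G) (s • z) := by
  have hdiff {k : ℝ → ℝ} (hk : ContDiff ℝ 1 k) : Differentiable ℝ (radialField k : E → E) :=
    (contDiff_radialField hk).differentiable one_ne_zero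
  have houter : Differentiable ℝ fun z : E => radialField G (s • z) :=
    (hdiff hG).comp (differentiable_id.const_smul s)
  unfold screenedField
  rw [fderiv_fun_sub (hdiff hg z) ((houter z).fun_const_smul _), fderiv_fun_const_smul (houter z),
    fderiv_comp_smul, mul_smul]

lemma screenedField_eq_zero {a s : ℝ} (hg : IsRegularizedPower (finrank ℝ E) a g)
    (hG : IsRegularizedPower (finrank ℝ E) 1 G) (hn : finrank ℝ E ≠ 0) (ha : a ≤ 1) (hs : 0 < s)
    (hs1 : s ≤ 1) {z : E} (hz : 1 ≤ s * ‖z‖) : screenedField g G s z = 0 := by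
  have hz1 : 1 ≤ ‖z‖ := hz.trans (mul_le_of_le_one_left (norm_nonneg z) hs1)
  have hsz : ‖s • z‖ ^ 2 = s ^ 2 * ‖z‖ ^ 2 := by rw [norm_smul, mul_pow, norm_of_nonneg hs.le]
  have hspow : (s ^ 2) ^ (-(finrank ℝ E : ℝ) / 2) = (s ^ finrank ℝ E)⁻¹ := by
    rw [← rpow_natCast s 2, ← rpow_mul hs.le, ← rpow_natCast, ← rpow_neg hs.le]
    push_cast
    ring_nf
  rw [screenedField, radialField, radialField, hg.eq_rpow _ (by nlinarith),
    hG.eq_rpow _ (by rw [hsz]; nlinarith), hsz, mul_rpow (by positivity) (by positivity), hspow,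
    ← mul_pow_sub_one hn s, smul_smul, smul_smul, ← sub_smul]
  field_simp
  simp

lemma fderiv_screenedField_eq_zero {a s : ℝ} (hg : IsRegularizedPower (finrank ℝ E) a g)
    (hG : IsRegularizedPower (finrank ℝ E) 1 G) (hn : finrank ℝ E ≠ 0) (ha : a ≤ 1) (hs : 0 < s)
    (hs1 : s ≤ 1) {z : E} (hz : 1 < s * ‖z‖) : fderiv ℝ (screenedField g G s) z = 0 := by
  have hnear : screenedField g G s =ᶠ[𝓝 z] fun _ => 0 := by
    filter_upwards [(continuous_norm.const_mul s).continuousAt.eventually_mem (Ioi_mem_nhds hz)]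
      with y hy using screenedField_eq_zero hg hG hn ha hs hs1 (le_of_lt hy)
  simp [hnear.fderiv_eq]

variable [FiniteDimensional ℝ E]

/-- The Laplacian of the screening part of `screenedField`. -/
def screeningLaplacian (G : ℝ → ℝ) (s : ℝ) (z : E) : E :=
  (s ^ (finrank ℝ E - 1) * s ^ 2) • Δ (radialField G : E → E) (s • z)

lemma laplacian_screenedField (hg : ContDiff ℝ 2 g) (hG : ContDiff ℝ 2 G) (s : ℝ) (z : E) :
    Δ (screenedField g G s : E → E) z
      = Δ (radialField g : E → E) z - screeningLaplacian G s z := by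
  have houter : ContDiff ℝ 2 fun z : E => radialField G (s • z) :=
    (contDiff_radialField hG).comp (contDiff_const_smul s)
  have hdil : Δ (fun z : E => radialField G (s • z)) z
      = s ^ 2 • Δ (radialField G : E → E) (s • z) := by
    simpa using laplacian_comp_add_smul 0 s (radialField G : E → E) z
  rw [screeningLaplacian, mul_smul, ← hdil, ← laplacian_smul _ houter.contDiffAt]
  exact (contDiff_radialField hg).contDiffAt.laplacian_sub (houter.const_smul _).contDiffAt

lemma continuous_screeningLaplacian (hG : ContDiff ℝ 2 G) (s : ℝ) :
    Continuous (screeningLaplacian G s : E → E) :=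
  ((continuous_laplacian (contDiff_radialField hG)).comp (continuous_const_smul s)).const_smul _

lemma hasCompactSupport_screeningLaplacian {a s : ℝ} (hG : IsRegularizedPower (finrank ℝ E) a G)
    (ha : 0 < a) (hs : s ≠ 0) : HasCompactSupport (screeningLaplacian G s : E → E) :=
  ((hasCompactSupport_laplacian_radialField hG ha).comp_smul hs).smul_left

lemma screeningLaplacian_eq_zero {s : ℝ} (hG : IsRegularizedPower (finrank ℝ E) 1 G) (hs : 0 < s)
    {z : E} (hz : 1 < s * ‖z‖) : screeningLaplacian G s z = 0 := by
  rw [screeningLaplacian, laplacian_radialField_eq_zero hG one_pos, smul_zero]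
  rw [norm_smul, norm_of_nonneg hs.le]
  exact one_lt_pow₀ hz two_ne_zero

variable [MeasurableSpace E] [BorelSpace E]

lemma integral_norm_screeningLaplacian {s : ℝ} (hs : 0 < s) (hn : finrank ℝ E ≠ 0) :
    ∫ z : E, ‖screeningLaplacian G s z‖ = s * ∫ z : E, ‖Δ (radialField G : E → E) z‖ := by
  simp_rw [screeningLaplacian, norm_smul, integral_const_mul]
  rw [Measure.integral_comp_smul volume (fun z : E => ‖Δ (radialField G : E → E) z‖),
    smul_eq_mul, abs_of_pos (by positivity), norm_of_nonneg (by positivity),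
    ← mul_pow_sub_one hn s]
  field_simp

end ScreenedField

section HalfSpaceEstimate

lemma norm_le_two_div_of_mul_norm_sub_le_one {E : Type*} [SeminormedAddCommGroup E] {ν y : E}
    (hν : ‖ν‖ = 1) {s : ℝ} (hs : 0 < s) (hs1 : s ≤ 1) (hy : s * ‖y - ν‖ ≤ 1) : ‖y‖ ≤ 2 / s := by
  have htri := norm_le_norm_sub_add y ν
  rw [le_div_iff₀ hs]
  nlinarith

variable {E : Type*} [NormedAddCommGroup E] [InnerProductSpace ℝ E] {ν : E}

lemma norm_reflection_sub_normal (y : E) : ‖(ℝ ∙ ν)ᗮ.reflection y - ν‖ = ‖y + ν‖ := by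
  rw [← LinearIsometryEquiv.norm_map (ℝ ∙ ν)ᗮ.reflection (y + ν), map_add,
    Submodule.reflection_orthogonalComplement_singleton_eq_neg, sub_eq_add_neg]

lemma one_lt_norm_add_sq (hν : ‖ν‖ = 1) {y : E} (hy : y ∈ halfSpace ν) : 1 < ‖y + ν‖ ^ 2 := by
  have hinner : 0 < ⟪y, ν⟫ := by rwa [real_inner_comm]
  rw [norm_add_sq_real, hν]
  nlinarith [sq_nonneg ‖y‖]

variable [FiniteDimensional ℝ E] [MeasurableSpace E] [BorelSpace E] {a s : ℝ} {g G : ℝ → ℝ}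
  {u : E → E}

lemma setIntegral_halfSpace_charge_mul_divergence (hν : ‖ν‖ = 1)
    (hg : IsRegularizedPower (finrank ℝ E) a g) (ha : 0 < a) (ha1 : a < 1) (hu : ContDiff ℝ 2 u) :
    ∫ y in halfSpace ν, divergence (radialField g) (y - ν) * divergence u y
      = -∫ y in halfSpace ν, ⟪u y, Δ (radialField g : E → E) (y - ν)⟫ := by
  have hgrad (y : E) : ∇ (fun y => divergence (radialField g) (y - ν)) y
      = Δ (radialField g : E → E) (y - ν) := by
    rw [laplacian_radialField hg.contDiff_two, gradient, fderiv_comp_sub, gradient]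
  simp_rw [← hgrad]
  refine setIntegral_halfSpace_mul_divergence hν ?_ (hu.of_le one_le_two) ?_ fun z => ?_
  · exact ((contDiff_divergence_radialField hg).of_le (by simp)).comp
      (contDiff_id.sub contDiff_const)
  · exact (hasCompactSupport_divergence_radialField hg ha).comp_homeomorph (Homeomorph.subRight ν)
  · refine divergence_radialField_eq_zero hg ha ?_
    rw [norm_sub_sq_of_mem_orthogonal hν]
    nlinarith [sq_nonneg ‖z‖]

variable (hν : ‖ν‖ = 1) (hg : IsRegularizedPower (finrank ℝ E) a g) (ha : 0 < a) (ha1 : a < 1)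
  (hG : IsRegularizedPower (finrank ℝ E) 1 G) (hs : 0 < s) (hs1 : s ≤ 1) (hu : ContDiff ℝ 2 u)
  (hΔ : ∀ y ∈ halfSpace ν, ‖y‖ ≤ 2 / s → Δ u y = 0)
include hν hg ha1 hG hs hs1

omit [FiniteDimensional ℝ E] [MeasurableSpace E] [BorelSpace E] in
lemma screenedField_sub_normal_eq_zero (hn : finrank ℝ E ≠ 0) {y : E} (hy : 2 / s < ‖y‖) :
    screenedField g G s (y - ν) = 0 :=
  screenedField_eq_zero hg hG hn ha1.le hs hs1 <| not_lt.1 fun h =>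
    hy.not_ge (norm_le_two_div_of_mul_norm_sub_le_one hν hs hs1 h.le)

include ha hu hΔ

lemma setIntegral_halfSpace_green_screenedField :
    ∫ y in halfSpace ν, (⟪u y, Δ (radialField g : E → E) (y - ν)⟫
        + ⟪u y, screeningLaplacian G s ((ℝ ∙ ν)ᗮ.reflection y - ν)
          - screeningLaplacian G s (y - ν)⟫)
      = -(2 * ∫ z : (ℝ ∙ ν)ᗮ, ⟪u z, fderiv ℝ (screenedField g G s) ((z : E) - ν) ν⟫) := by
  have hn : finrank ℝ E ≠ 0 :=
    (Module.finrank_pos_iff.2 ⟨ν, 0, by simp [← norm_ne_zero_iff, hν]⟩).ne'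
  have hsub : ContDiff ℝ 2 fun y : E => y - ν := contDiff_id.sub contDiff_const
  have hF := (contDiff_screenedField hg.contDiff_two hG.contDiff_two s).comp hsub
  have hF0 {y : E} (hy : 2 / s < ‖y‖) : screenedField g G s (y - ν) = 0 :=
    screenedField_sub_normal_eq_zero hν hg ha1 hG hs hs1 hn hy
  have hFsupp : HasCompactSupport fun y => screenedField g G s (y - ν) :=
    .intro (isCompact_closedBall 0 (2 / s)) fun y hy => hF0 (by simpa using hy)
  have hlap (y : E) : Δ (fun y => screenedField g G s (y - ν)) y
      = Δ (radialField g : E → E) (y - ν) - screeningLaplacian G s (y - ν) := by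
    rw [← laplacian_screenedField hg.contDiff_two hG.contDiff_two]
    simpa [sub_eq_neg_add] using laplacian_comp_add_smul (-ν) 1 (screenedField g G s) y
  have hgreen := setIntegral_halfSpace_green_reflection hν hu hF hFsupp
  simp only [Function.comp_def, hlap, fderiv_comp_sub] at hgreen
  rw [← hgreen, ← integral_neg]
  refine setIntegral_congr_fun (measurableSet_halfSpace ν) fun y hy => ?_
  have himage : Δ (radialField g : E → E) ((ℝ ∙ ν)ᗮ.reflection y - ν) = 0 := by
    refine laplacian_radialField_eq_zero hg ha ?_
    rw [norm_reflection_sub_normal]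
    exact ha1.trans (one_lt_norm_add_sq hν hy)
  have hharm : ⟪Δ u y, screenedField g G s ((ℝ ∙ ν)ᗮ.reflection y - ν)
      - screenedField g G s (y - ν)⟫ = 0 := by
    rcases le_or_gt ‖y‖ (2 / s) with hnear | hfar
    · rw [hΔ y hy hnear, inner_zero_left]
    · rw [hF0 hfar, hF0 (by rwa [LinearIsometryEquiv.norm_map]), sub_self, inner_zero_right]
  rw [himage, hharm, ← inner_add_right, sub_zero, ← inner_neg_right]
  congr 1
  abel

theorem setIntegral_halfSpace_charge_mul_divergence_eq_boundary :
    ∫ y in halfSpace ν, divergence (radialField g) (y - ν) * divergence u y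
      = 2 * (∫ z : (ℝ ∙ ν)ᗮ, ⟪u z, fderiv ℝ (screenedField g G s) ((z : E) - ν) ν⟫)
        + ∫ y in halfSpace ν, ⟪u y, screeningLaplacian G s ((ℝ ∙ ν)ᗮ.reflection y - ν)
          - screeningLaplacian G s (y - ν)⟫ := by
  set L := (ℝ ∙ ν)ᗮ.reflection
  have hcharge : Integrable fun y => ⟪u y, Δ (radialField g : E → E) (y - ν)⟫ :=
    integrable_inner_of_hasCompactSupport hu.continuous
      ((continuous_laplacian (contDiff_radialField hg.contDiff_two)).comp (continuous_sub_right ν))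
      ((hasCompactSupport_laplacian_radialField hg ha).comp_homeomorph (Homeomorph.subRight ν))
  have hcont : Continuous fun y : E => screeningLaplacian G s (y - ν) :=
    (continuous_screeningLaplacian hG.contDiff_two s).comp (continuous_sub_right ν)
  have hsupp : HasCompactSupport fun y : E => screeningLaplacian G s (y - ν) :=
    (hasCompactSupport_screeningLaplacian hG one_pos hs.ne').comp_homeomorph (Homeomorph.subRight ν)
  have hscreen : Integrable fun y =>
      ⟪u y, screeningLaplacian G s (L y - ν) - screeningLaplacian G s (y - ν)⟫ :=
    integrable_inner_of_hasCompactSupport hu.continuous ((hcont.comp L.continuous).sub hcont)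
      ((hsupp.comp_homeomorph L.toHomeomorph).sub hsupp)
  have hgreen := setIntegral_halfSpace_green_screenedField hν hg ha ha1 hG hs hs1 hu hΔ
  rw [integral_add hcharge.integrableOn hscreen.integrableOn] at hgreen
  rw [setIntegral_halfSpace_charge_mul_divergence hν hg ha ha1 hu]
  linarith

end HalfSpaceEstimate

section BoundaryEstimate

variable {E : Type*} [NormedAddCommGroup E] [InnerProductSpace ℝ E] [FiniteDimensional ℝ E]
  {ν : E}

lemma finrank_orthogonal_singleton_add_one (hν : ‖ν‖ = 1) :
    finrank ℝ (ℝ ∙ ν)ᗮ + 1 = finrank ℝ E := by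
  rw [← (ℝ ∙ ν).finrank_add_finrank_orthogonal, add_comm,
    finrank_span_singleton (norm_ne_zero_iff.1 (by simp [hν]))]

variable {a s C : ℝ} {g G : ℝ → ℝ} {u : E → E} (hν : ‖ν‖ = 1)
  (hG : IsRegularizedPower (finrank ℝ E) 1 G) (hs : 0 < s) (hs1 : s ≤ 1)
  (hu : ∀ y, 0 ≤ ⟪ν, y⟫ → ‖y‖ ≤ 2 / s → ‖u y‖ ≤ 1)
include hν hG hs hs1 hu

lemma abs_inner_fderiv_screenedField_le (hg : IsRegularizedPower (finrank ℝ E) a g) (ha : 0 < a)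
    (ha1 : a < 1) (hC : ∀ z : E, ‖z‖ ≤ 1 → ‖fderiv ℝ (radialField G) z‖ ≤ C) (z : (ℝ ∙ ν)ᗮ) :
    |⟪u z, fderiv ℝ (screenedField g G s) ((z : E) - ν) ν⟫|
      ≤ boundaryKernel (finrank ℝ E) (‖z‖ ^ 2)
        + s ^ finrank ℝ E * (closedBall 0 1).indicator (fun _ => C) (s • z) := by
  have hn := finrank_orthogonal_singleton_add_one hν
  have hC0 : 0 ≤ C := (norm_nonneg _).trans (hC 0 (by simp))
  rcases le_or_gt (s * ‖(z : E) - ν‖) 1 with hnear | hfar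
  · have hz : ‖z‖ ≤ ‖(z : E) - ν‖ := by
      rw [← sq_le_sq₀ (norm_nonneg _) (norm_nonneg _), norm_sub_sq_of_mem_orthogonal hν]
      linarith
    have hmem : s • z ∈ closedBall (0 : (ℝ ∙ ν)ᗮ) 1 := by
      rw [mem_closedBall_zero_iff, norm_smul, norm_of_nonneg hs.le]
      exact (mul_le_mul_of_nonneg_left hz hs.le).trans hnear
    have hscreen : ‖fderiv ℝ (radialField G) (s • ((z : E) - ν)) ν‖ ≤ C := by
      refine (ContinuousLinearMap.le_opNorm _ _).trans ?_
      rw [hν, mul_one]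
      exact hC _ (by rwa [norm_smul, norm_of_nonneg hs.le])
    have hu1 : ‖u z‖ ≤ 1 :=
      hu z (Submodule.mem_orthogonal_singleton_iff_inner_right.1 z.2).ge
        (norm_le_two_div_of_mul_norm_sub_le_one hν hs hs1 hnear)
    calc |⟪u z, fderiv ℝ (screenedField g G s) ((z : E) - ν) ν⟫|
        ≤ ‖fderiv ℝ (screenedField g G s) ((z : E) - ν) ν‖ :=
          (abs_real_inner_le_norm _ _).trans (mul_le_of_le_one_left (norm_nonneg _) hu1)
      _ ≤ ‖fderiv ℝ (radialField g) ((z : E) - ν) ν‖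
          + s ^ finrank ℝ E * ‖fderiv ℝ (radialField G) (s • ((z : E) - ν)) ν‖ := by
          rw [fderiv_screenedField (hg.contDiff_two.of_le one_le_two)
            (hG.contDiff_two.of_le one_le_two), ← pow_succ, Nat.sub_add_cancel (by lia),
            _root_.sub_apply, _root_.smul_apply]
          exact (norm_sub_le _ _).trans_eq (by rw [norm_smul, norm_of_nonneg (by positivity)])
      _ ≤ _ := by
          rw [norm_fderiv_radialField_sub_normal hg ha ha1 hν, Set.indicator_of_mem hmem]
          gcongr
  · rw [fderiv_screenedField_eq_zero hg hG (by lia) ha1.le hs hs1 hfar, _root_.zero_apply,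
      inner_zero_right, abs_zero]
    have := boundaryKernel_nonneg (finrank ℝ E) (sq_nonneg ‖z‖)
    have := Set.indicator_nonneg (s := closedBall (0 : (ℝ ∙ ν)ᗮ) 1) (fun _ _ => hC0) (s • z)
    positivity

variable [MeasurableSpace E] [BorelSpace E]

lemma two_mul_abs_integral_inner_fderiv_screenedField_le (hE : 2 ≤ finrank ℝ E)
    (hg : IsRegularizedPower (finrank ℝ E) a g) (ha : 0 < a) (ha1 : a < 1)
    (hC : ∀ z : E, ‖z‖ ≤ 1 → ‖fderiv ℝ (radialField G) z‖ ≤ C) :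
    2 * |∫ z : (ℝ ∙ ν)ᗮ, ⟪u z, fderiv ℝ (screenedField g G s) ((z : E) - ν) ν⟫|
      ≤ sphereArea (finrank ℝ E) * Dconst (finrank ℝ E)
        + 2 * (C * volume.real (closedBall (0 : (ℝ ∙ ν)ᗮ) 1)) * s := by
  have hn := finrank_orthogonal_singleton_add_one hν
  have : Nontrivial (ℝ ∙ ν)ᗮ := Module.finrank_pos_iff (R := ℝ) |>.1 (by lia)
  have hkernel := integrable_boundaryKernel (P := (ℝ ∙ ν)ᗮ)
  have hball : Integrable ((closedBall (0 : (ℝ ∙ ν)ᗮ) 1).indicator fun _ => C) :=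
    integrableOn_const measure_closedBall_lt_top.ne |>.integrable_indicator measurableSet_closedBall
  have hscale : ∫ z : (ℝ ∙ ν)ᗮ, s ^ finrank ℝ E * (closedBall 0 1).indicator (fun _ => C) (s • z)
      = C * volume.real (closedBall (0 : (ℝ ∙ ν)ᗮ) 1) * s := by
    rw [integral_const_mul, Measure.integral_comp_smul volume, integral_indicator
      measurableSet_closedBall, setIntegral_const, abs_of_pos (by positivity), ← hn]
    simp only [smul_eq_mul]
    field_simp
    ring
  rw [hn] at hkernel
  have hscreen := (hball.comp_smul hs.ne').const_mul (s ^ finrank ℝ E)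
  have hbound := norm_integral_le_of_norm_le
    (f := fun z : (ℝ ∙ ν)ᗮ => ⟪u z, fderiv ℝ (screenedField g G s) ((z : E) - ν) ν⟫)
    (hkernel.add hscreen)
    (.of_forall fun z => abs_inner_fderiv_screenedField_le hν hG hs hs1 hu hg ha ha1 hC z)
  rw [integral_add' hkernel hscreen, hscale] at hbound
  have hD := two_mul_integral_boundaryKernel (P := (ℝ ∙ ν)ᗮ)
  rw [hn] at hD
  rw [← hD, ← norm_eq_abs]
  linarith

lemma abs_setIntegral_inner_screeningLaplacian_le :
    |∫ y in halfSpace ν, ⟪u y, screeningLaplacian G s ((ℝ ∙ ν)ᗮ.reflection y - ν)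
        - screeningLaplacian G s (y - ν)⟫|
      ≤ 2 * (∫ z : E, ‖Δ (radialField G : E → E) z‖) * s := by
  have hn : finrank ℝ E ≠ 0 := finrank_orthogonal_singleton_add_one hν ▸ Nat.succ_ne_zero _
  set K : E → E := screeningLaplacian G s
  have hK {y : E} (hy : 2 / s < ‖y‖) : K (y - ν) = 0 := screeningLaplacian_eq_zero hG hs <|
    not_le.1 fun h => hy.not_ge (norm_le_two_div_of_mul_norm_sub_le_one hν hs hs1 h)
  have hpoint (y : E) (hy : y ∈ halfSpace ν) :
      ‖⟪u y, K ((ℝ ∙ ν)ᗮ.reflection y - ν) - K (y - ν)⟫‖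
        ≤ ‖K ((ℝ ∙ ν)ᗮ.reflection y - ν)‖ + ‖K (y - ν)‖ := by
    rcases le_or_gt ‖y‖ (2 / s) with hnear | hfar
    · refine (norm_inner_le_norm _ _).trans ?_
      exact (mul_le_of_le_one_left (norm_nonneg _) (hu y (le_of_lt hy) hnear)).trans
        (norm_sub_le _ _)
    · rw [hK hfar, hK (by rwa [LinearIsometryEquiv.norm_map])]
      simp
  have hint : Integrable fun y => ‖K (y - ν)‖ :=
    ((continuous_screeningLaplacian hG.contDiff_two s).integrable_of_hasCompactSupport
      (hasCompactSupport_screeningLaplacian hG one_pos hs.ne')).norm.comp_sub_right ν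
  have hreflect := ((ℝ ∙ ν)ᗮ.reflection).measurePreserving
  have hintR : Integrable fun y => ‖K ((ℝ ∙ ν)ᗮ.reflection y - ν)‖ :=
    hreflect.integrable_comp_of_integrable hint
  calc |∫ y in halfSpace ν, ⟪u y, K ((ℝ ∙ ν)ᗮ.reflection y - ν) - K (y - ν)⟫|
      ≤ ∫ y in halfSpace ν, (‖K ((ℝ ∙ ν)ᗮ.reflection y - ν)‖ + ‖K (y - ν)‖) :=
        norm_integral_le_of_norm_le (hintR.add hint).integrableOn
          (ae_restrict_of_forall_mem (measurableSet_halfSpace ν) hpoint)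
    _ ≤ ∫ y, (‖K ((ℝ ∙ ν)ᗮ.reflection y - ν)‖ + ‖K (y - ν)‖) :=
        setIntegral_le_integral (hintR.add hint) (.of_forall fun y => by positivity)
    _ = 2 * (∫ z, ‖Δ (radialField G : E → E) z‖) * s := by
        rw [integral_add hintR hint, hreflect.integral_comp
          (ℝ ∙ ν)ᗮ.reflection.toHomeomorph.measurableEmbedding fun y => ‖K (y - ν)‖,
          integral_sub_right_eq_self (fun y => ‖K y‖) ν, integral_norm_screeningLaplacian hs hn]
        ring

end BoundaryEstimate

section HalfSpaceDivergence

variable {E : Type*} [NormedAddCommGroup E] [InnerProductSpace ℝ E] [FiniteDimensional ℝ E]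
  [MeasurableSpace E] [BorelSpace E] {a : ℝ} {g : ℝ → ℝ}

lemma abs_integral_charge_mul_sub_le [Nontrivial E] (hg : IsRegularizedPower (finrank ℝ E) a g)
    (ha : 0 < a) {f : E → ℝ} (hf : Continuous f) {x : E} {η : ℝ}
    (hη : ∀ y, ‖y - x‖ ^ 2 ≤ a → |f y - f x| ≤ η) :
    |(∫ y, divergence (radialField g) (y - x) * f y) - sphereArea (finrank ℝ E) * f x|
      ≤ sphereArea (finrank ℝ E) * η := by
  set ρ : E → ℝ := fun y => divergence (radialField g) (y - x)
  have hρ : Continuous ρ :=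
    (contDiff_divergence_radialField hg).continuous.comp (continuous_id.sub continuous_const)
  have hsupp : HasCompactSupport ρ :=
    (hasCompactSupport_divergence_radialField hg ha).comp_homeomorph (Homeomorph.subRight x)
  have hint {h : E → ℝ} (hh : Continuous h) : Integrable fun y => ρ y * h y :=
    (hρ.mul hh).integrable_of_hasCompactSupport hsupp.mul_right
  have hmass (r : ℝ) : ∫ y, ρ y * r = sphereArea (finrank ℝ E) * r := by
    rw [integral_mul_const, integral_sub_right_eq_self (divergence (radialField g)) x,
      integral_divergence_radialField hg]
  rw [← hmass (f x), ← hmass η, ← integral_sub (hint hf) (hint continuous_const)]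
  refine norm_integral_le_of_norm_le (f := fun y => ρ y * f y - ρ y * f x)
    (hint continuous_const) (.of_forall fun y => ?_)
  rcases le_or_gt (‖y - x‖ ^ 2) a with hnear | hfar
  · rw [← mul_sub, norm_mul, norm_of_nonneg (divergence_radialField_nonneg hg (y - x))]
    exact mul_le_mul_of_nonneg_left (hη y hnear) (divergence_radialField_nonneg hg (y - x))
  · simp [ρ, divergence_radialField_eq_zero hg ha hfar]

variable {ν : E} (hν : ‖ν‖ = 1)
include hν

lemma setIntegral_halfSpace_charge_mul (hg : IsRegularizedPower (finrank ℝ E) a g) (ha : 0 < a)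
    (ha1 : a < 1) (f : E → ℝ) :
    ∫ y in halfSpace ν, divergence (radialField g) (y - ν) * f y
      = ∫ y, divergence (radialField g) (y - ν) * f y := by
  refine setIntegral_eq_integral_of_forall_compl_eq_zero fun y hy => ?_
  have hinner : ⟪y, ν⟫ ≤ 0 := by rw [real_inner_comm]; exact not_lt.1 hy
  have hfar : a < ‖y - ν‖ ^ 2 := by
    rw [norm_sub_sq_real, hν]
    nlinarith [sq_nonneg ‖y‖]
  rw [divergence_radialField_eq_zero hg ha hfar, zero_mul]

lemma exists_abs_setIntegral_halfSpace_charge_mul_divergence_le (hE : 2 ≤ finrank ℝ E) :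
    ∃ C, ∀ s > 0, s ≤ 1 → ∀ u : E → E, ContDiff ℝ 2 u →
      (∀ y ∈ halfSpace ν, ‖y‖ ≤ 2 / s → Δ u y = 0) →
      (∀ y, 0 ≤ ⟪ν, y⟫ → ‖y‖ ≤ 2 / s → ‖u y‖ ≤ 1) →
      ∀ a g, 0 < a → a < 1 → IsRegularizedPower (finrank ℝ E) a g →
      |∫ y in halfSpace ν, divergence (radialField g) (y - ν) * divergence u y|
        ≤ sphereArea (finrank ℝ E) * Dconst (finrank ℝ E) + C * s := by
  obtain ⟨G, hG⟩ := exists_isRegularizedPower (finrank ℝ E) one_pos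
  have hcont : Continuous (fderiv ℝ (radialField G : E → E)) :=
    (contDiff_radialField hG.contDiff_two).continuous_fderiv two_ne_zero
  obtain ⟨B, hB⟩ := (isCompact_closedBall (0 : E) 1).exists_bound_of_continuousOn hcont.continuousOn
  refine ⟨2 * (B * volume.real (closedBall (0 : (ℝ ∙ ν)ᗮ) 1))
    + 2 * ∫ z : E, ‖Δ (radialField G : E → E) z‖, fun s hs hs1 u hu hΔ hu1 a g ha ha1 hg => ?_⟩
  rw [setIntegral_halfSpace_charge_mul_divergence_eq_boundary hν hg ha ha1 hG hs hs1 hu hΔ]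
  have hboundary := two_mul_abs_integral_inner_fderiv_screenedField_le hν hG hs hs1 hu1 hE hg ha ha1
    fun z hz => hB z (by simpa using hz)
  have hscreening := abs_setIntegral_inner_screeningLaplacian_le hν hG hs hs1 hu1
  refine (abs_add_le _ _).trans ?_
  rw [abs_mul, abs_two]
  linarith

lemma exists_abs_divergence_le_Dconst_add_mul (hE : 2 ≤ finrank ℝ E) :
    ∃ C, ∀ s > 0, s ≤ 1 → ∀ u : E → E, ContDiff ℝ 2 u →
      (∀ y ∈ halfSpace ν, ‖y‖ ≤ 2 / s → Δ u y = 0) →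
      (∀ y, 0 ≤ ⟪ν, y⟫ → ‖y‖ ≤ 2 / s → ‖u y‖ ≤ 1) →
      |divergence u ν| ≤ Dconst (finrank ℝ E) + C * s := by
  have : Nontrivial E := Module.finrank_pos_iff (R := ℝ) |>.1 (by lia)
  have hω : 0 < sphereArea (finrank ℝ E) := sphereArea_pos (by lia)
  obtain ⟨C, hC⟩ := exists_abs_setIntegral_halfSpace_charge_mul_divergence_le hν hE
  refine ⟨C / sphereArea (finrank ℝ E), fun s hs hs1 u hu hΔ hu1 =>
    le_of_forall_pos_le_add fun η hη => ?_⟩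
  have hdiv : Continuous (divergence u) := (contDiff_divergence (m := 1) hu).continuous
  obtain ⟨r, hr, hclose⟩ := Metric.continuous_iff.1 hdiv ν η hη
  obtain ⟨a, ha, har⟩ := exists_between (show 0 < min 1 (r ^ 2) by positivity)
  obtain ⟨ha1, har⟩ := lt_min_iff.1 har
  obtain ⟨g, hg⟩ := exists_isRegularizedPower (finrank ℝ E) ha
  have happrox := abs_integral_charge_mul_sub_le hg ha hdiv (x := ν) (η := η) fun y hy =>
    (hclose y (by
      rw [dist_eq_norm]; exact lt_of_pow_lt_pow_left₀ 2 hr.le (hy.trans_lt har))).le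
  rw [← setIntegral_halfSpace_charge_mul hν hg ha ha1] at happrox
  have hscaled : sphereArea (finrank ℝ E) * |divergence u ν|
      ≤ sphereArea (finrank ℝ E) * Dconst (finrank ℝ E) + C * s
        + sphereArea (finrank ℝ E) * η := by
    have htri := abs_sub_abs_le_abs_sub (sphereArea (finrank ℝ E) * divergence u ν)
      (∫ y in halfSpace ν, divergence (radialField g) (y - ν) * divergence u y)
    rw [abs_sub_comm, abs_mul, abs_of_pos hω] at htri
    linarith [hC s hs hs1 u hu hΔ hu1 a g ha ha1 hg]
  refine le_of_mul_le_mul_left (hscaled.trans_eq ?_) hω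
  field_simp

end HalfSpaceDivergence

section InteriorBall

variable {E : Type*} [NormedAddCommGroup E] [InnerProductSpace ℝ E]

lemma exists_contDiff_eventuallyEq_of_lt [FiniteDimensional ℝ E] {F : Type*} [NormedAddCommGroup F]
    [NormedSpace ℝ F] {k : ℕ∞} {u : E → F} {c : E} {r R : ℝ} (hu : ContDiffOn ℝ k u (ball c R))
    (hrR : r < R) : ∃ v : E → F, ContDiff ℝ k v ∧ ∀ y ∈ closedBall c r, v =ᶠ[𝓝 y] u := by
  rcases lt_or_ge r 0 with hr | hr
  · exact ⟨0, contDiff_const, by simp [closedBall_eq_empty.2 hr]⟩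
  obtain ⟨rIn, hrIn, hrInR⟩ := exists_between hrR
  obtain ⟨rOut, hrOut, hrOutR⟩ := exists_between hrInR
  let χ : ContDiffBump c := ⟨rIn, rOut, hr.trans_lt hrIn, hrOut⟩
  refine ⟨fun y => χ y • u y, contMDiff_iff_contDiff.1 <|
    contMDiff_of_tsupport fun y hy => ?_, fun y hy => ?_⟩
  · have hy : y ∈ ball c R :=
      closedBall_subset_ball hrOutR (χ.tsupport_eq ▸ tsupport_smul_subset_left _ _ hy)
    exact (χ.contDiffAt.smul (hu.contDiffAt (isOpen_ball.mem_nhds hy))).contMDiffAt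
  · filter_upwards [χ.eventuallyEq_one_of_mem_ball (closedBall_subset_ball hrIn hy)] with z hz
    simp [hz]

lemma norm_add_smul_sub_normal_sq_le {ν y : E} (hν : ‖ν‖ = 1) (hy : 0 ≤ ⟪ν, y⟫) {M σ d R : ℝ}
    (hyM : ‖y‖ ≤ M) (hσ : 0 ≤ σ) (hσ1 : σ ≤ 1) (hd : 0 ≤ d) (hR : 0 ≤ R)
    (hdR : d * (1 + M ^ 2) ≤ R * σ) :
    ‖(σ * d) • ν + (d * (1 - σ)) • y - R • ν‖ ^ 2 ≤ R ^ 2 - R * σ * d := by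
  have hσd : σ * d ≤ R := by nlinarith [mul_nonneg hd (sq_nonneg M), mul_le_of_le_one_right hR hσ1]
  have hcross : 0 ≤ (R - σ * d) * (d * (1 - σ)) * ⟪ν, y⟫ := by
    have := sub_nonneg.2 hσd
    have := sub_nonneg.2 hσ1
    positivity
  have hsq : ‖(d * (1 - σ)) • y‖ ^ 2 ≤ d ^ 2 * M ^ 2 := by
    rw [norm_smul, norm_of_nonneg (mul_nonneg hd (sub_nonneg.2 hσ1)), ← mul_pow]
    gcongr
    exact mul_le_of_le_one_right hd (sub_le_self 1 hσ)
  calc ‖(σ * d) • ν + (d * (1 - σ)) • y - R • ν‖ ^ 2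
      = ‖(d * (1 - σ)) • y - (R - σ * d) • ν‖ ^ 2 := by congr 2; module
    _ = ‖(d * (1 - σ)) • y‖ ^ 2 - 2 * ((R - σ * d) * (d * (1 - σ)) * ⟪ν, y⟫)
        + (R - σ * d) ^ 2 := by
        rw [norm_sub_sq_real, norm_smul (R - σ * d), hν, mul_one, norm_eq_abs (R - σ * d), sq_abs,
          real_inner_smul_left, real_inner_smul_right, real_inner_comm]
        ring
    _ ≤ d ^ 2 * M ^ 2 + (R - σ * d) ^ 2 := by linarith
    _ ≤ R ^ 2 - R * σ * d := by
        have hσd2 : (σ * d) ^ 2 ≤ d ^ 2 := by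
          gcongr
          exact mul_le_of_le_one_left hd hσ1
        nlinarith [mul_le_mul_of_nonneg_left hdR hd]

variable [FiniteDimensional ℝ E] [MeasurableSpace E] [BorelSpace E]

-- The half-ball `{0 ≤ ⟪ν, y⟫, ‖y‖ ≤ 2 / s}` is mapped into the ball
-- by `y ↦ ξ + (s * d) • ν + (d * (1 - s)) • y`, which sends `ν` to `ξ + d • ν`.
lemma exists_mul_abs_divergence_le_of_ball (hE : 2 ≤ finrank ℝ E) {ν : E} (hν : ‖ν‖ = 1) :
    ∃ C, ∀ s d R, 0 < s → s < 1 → 0 < d → d * (1 + (2 / s) ^ 2) ≤ R * s → ∀ (ξ : E) (u : E → E),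
      HarmonicOnNhd u (ball (ξ + R • ν) R) → (∀ y ∈ ball (ξ + R • ν) R, ‖u y‖ ≤ 1) →
      (1 - s) * (d * |divergence u (ξ + d • ν)|) ≤ Dconst (finrank ℝ E) + C * s := by
  obtain ⟨C, hC⟩ := exists_abs_divergence_le_Dconst_add_mul hν hE
  refine ⟨C, fun s d R hs hs1 hd hdR ξ u hu hu1 => ?_⟩
  set p := ξ + (s * d) • ν
  have hR : 0 < R := pos_of_mul_pos_left (lt_of_lt_of_le (by positivity) hdR) hs.le
  have hmaps {y : E} (hy : 0 ≤ ⟪ν, y⟫) (hyM : ‖y‖ ≤ 2 / s) :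
      p + (d * (1 - s)) • y ∈ closedBall (ξ + R • ν) √(R ^ 2 - R * s * d) := by
    have := norm_add_smul_sub_normal_sq_le hν hy hyM hs.le hs1.le hd.le hR.le hdR
    rw [mem_closedBall_iff_norm]
    refine le_sqrt_of_sq_le (this.trans_eq' ?_)
    congr 2
    module
  have hrR : √(R ^ 2 - R * s * d) < R := (sqrt_lt' hR).2 (sub_lt_self _ (by positivity))
  obtain ⟨v, hv, hvu⟩ := exists_contDiff_eventuallyEq_of_lt (k := 2) hu.contDiffOn hrR
  have hball := closedBall_subset_ball hrR (x := ξ + R • ν)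
  have hbound := hC s hs hs1.le (fun y => v (p + (d * (1 - s)) • y))
    (hv.comp (contDiff_const.add (contDiff_const_smul _))) ?_ ?_
  · have hcenter : p + (d * (1 - s)) • ν = ξ + d • ν := by module
    have hν0 : 0 ≤ ⟪ν, ν⟫ := real_inner_self_nonneg
    have hν2 : ‖ν‖ ≤ 2 / s := by rw [hν, le_div_iff₀ hs]; linarith
    rw [divergence_comp_add_smul, divergence, (hvu _ (hmaps hν0 hν2)).fderiv_eq, ← divergence,
      hcenter, abs_mul, abs_of_nonneg (by nlinarith)] at hbound
    linarith
  · intro y hy hyM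
    have hmem := hmaps (le_of_lt hy) hyM
    rw [laplacian_comp_add_smul, (laplacian_congr_nhds (hvu _ hmem)).eq_of_nhds,
      (hu _ (hball hmem)).2.eq_of_nhds, Pi.zero_apply, smul_zero]
  · intro y hy hyM
    have hmem := hmaps hy hyM
    exact (hvu _ hmem).eq_of_nhds ▸ hu1 _ (hball hmem)

end InteriorBall

section Coordinates

variable {n : ℕ} {u : Eu n → Eu n}

lemma divergence_eq_divg {x : Eu n} (hu : DifferentiableAt ℝ u x) :
    divergence u x = divg u x := by
  rw [divergence_eq_sum_inner (EuclideanSpace.basisFun (Fin n) ℝ), divg]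
  refine Finset.sum_congr rfl fun j _ => ?_
  rw [EuclideanSpace.basisFun_apply, EuclideanSpace.inner_single_left]
  have hcoord : fderiv ℝ (fun y => u y j) x
      = (EuclideanSpace.proj j : Eu n →L[ℝ] ℝ).comp (fderiv ℝ u x) :=
    ((EuclideanSpace.proj j : Eu n →L[ℝ] ℝ).hasFDerivAt.comp x hu.hasFDerivAt).fderiv
  simp [hcoord]

lemma harmonicOnNhd_of_isHarmonicOn {Ω : Set (Eu n)} (hΩ : IsOpen Ω)
    (hu : ∀ j, IsHarmonicOn (fun y => u y j) Ω) : HarmonicOnNhd u Ω := by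
  have hcont {x : Eu n} (hx : x ∈ Ω) : ContDiffAt ℝ 2 u x :=
    contDiffAt_euclidean.2 fun j => (hu j).1.contDiffAt (hΩ.mem_nhds hx)
  refine fun x hx => ⟨hcont hx, ?_⟩
  filter_upwards [hΩ.mem_nhds hx] with y hy
  ext j
  have hcoord : Δ (fun y => u y j) y = Δ u y j :=
    (hcont hy).laplacian_CLM_comp_left (l := EuclideanSpace.proj j)
  rw [← hcoord, laplacian_eq_sum_fderiv ((hu j).1.contDiffAt (hΩ.mem_nhds hy))
    (EuclideanSpace.basisFun (Fin n) ℝ)]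
  simpa using (hu j).2 y hy

end Coordinates

theorem limsup_divergence_interior_ball_general {E : Type*} [NormedAddCommGroup E]
    [InnerProductSpace ℝ E] [FiniteDimensional ℝ E] (hE : 2 ≤ finrank ℝ E) {c ξ : E} {R : ℝ}
    (hR : 0 < R) (hξ : ξ ∈ sphere c R) {ε : ℝ} (hε : 0 < ε) :
    ∃ δ > 0, ∀ t : ℝ, 1 - δ < t → t < 1 → ∀ u : E → E, HarmonicOnNhd u (ball c R) →
      (∀ y ∈ ball c R, ‖u y‖ ≤ 1) →
      dist (c + t • (ξ - c)) ξ * |divergence u (c + t • (ξ - c))|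
        ≤ Dconst (finrank ℝ E) + ε := by
  borelize E
  have hnorm : ‖c - ξ‖ = R := by rwa [mem_sphere_iff_norm, norm_sub_rev] at hξ
  have hν : ‖R⁻¹ • (c - ξ)‖ = 1 := by
    rw [norm_smul, hnorm, norm_inv, norm_of_nonneg hR.le, inv_mul_cancel₀ hR.ne']
  obtain ⟨C, hC⟩ := exists_mul_abs_divergence_le_of_ball hE hν
  obtain ⟨s, hs, hs1, hsε⟩ : ∃ s > 0, s < 1 ∧
      Dconst (finrank ℝ E) + C * s < (1 - s) * (Dconst (finrank ℝ E) + ε) := by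
    have hlim : ∀ᶠ s in 𝓝[>] (0 : ℝ),
        Dconst (finrank ℝ E) + C * s < (1 - s) * (Dconst (finrank ℝ E) + ε) :=
      nhdsWithin_le_nhds <| ContinuousAt.eventually_lt (by fun_prop) (by fun_prop) (by simpa)
    obtain ⟨s, hsε, hs⟩ := (hlim.and (Ioo_mem_nhdsGT one_pos)).exists
    exact ⟨s, hs.1, hs.2, hsε⟩
  refine ⟨s / (1 + (2 / s) ^ 2), by positivity, fun t hδt ht u hu hu1 => ?_⟩
  have hcenter : ξ + R • R⁻¹ • (c - ξ) = c := by rw [smul_inv_smul₀ hR.ne', add_sub_cancel]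
  have hpoint : ξ + ((1 - t) * R) • R⁻¹ • (c - ξ) = c + t • (ξ - c) := by
    rw [mul_smul, smul_inv_smul₀ hR.ne']
    module
  have hdist : dist (c + t • (ξ - c)) ξ = (1 - t) * R := by
    rw [← hpoint, dist_self_add_left, norm_smul, hν, mul_one, norm_of_nonneg]
    nlinarith
  have hsmall : (1 - t) * R * (1 + (2 / s) ^ 2) ≤ R * s := by
    have : (1 - t) * (1 + (2 / s) ^ 2) ≤ s := ((lt_div_iff₀ (by positivity)).1 (by linarith)).le
    nlinarith
  have hbound := hC s ((1 - t) * R) R hs hs1 (mul_pos (sub_pos.2 ht) hR) hsmall ξ u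
  rw [hcenter, hpoint, ← hdist] at hbound
  exact le_of_mul_le_mul_left ((hbound hu hu1).trans hsε.le) (sub_pos.2 hs1)

/-- Let `Ω ⊂ ℝⁿ` (`n ≥ 2`) be a domain and suppose `ξ ∈ ∂Ω` is
touched by an interior ball `B = ball c R ⊆ Ω`. Then, along the radius
`x_t = c + t(ξ - c)`, `limsup_{x→ξ} sup_{u ∈ 𝔘(Ω)} |x-ξ| |div u(x)| ≤ D_n`, where
`𝔘(Ω)` is the set of `n`-component vector fields with harmonic components and
`sup_Ω |u| ≤ 1`: for every `ε > 0` there is `δ > 0` such that for all `t ∈ (1-δ, 1)`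
and all such `u`, `|x_t - ξ| |div u(x_t)| ≤ D_n + ε`. -/
theorem limsup_divergence_interior_ball
    (n : ℕ) (hn : 2 ≤ n)
    (Ω : Set (Eu n)) (hΩo : IsOpen Ω) (hΩc : IsConnected Ω)
    (c ξ : Eu n) (R : ℝ) (hR : 0 < R)
    (hball : Metric.ball c R ⊆ Ω) (hξs : ξ ∈ Metric.sphere c R) (hξ : ξ ∈ frontier Ω)
    (ε : ℝ) (hε : 0 < ε) :
    ∃ δ > 0, ∀ t : ℝ, 1 - δ < t → t < 1 →
      ∀ u : Eu n → Eu n, (∀ j : Fin n, IsHarmonicOn (fun y => u y j) Ω) →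
        (∀ y ∈ Ω, ‖u y‖ ≤ 1) →
        dist (c + t • (ξ - c)) ξ * |divg u (c + t • (ξ - c))| ≤ Dconst n + ε := by
  obtain ⟨δ, hδ, hbound⟩ := limsup_divergence_interior_ball_general
    (E := Eu n) (by simpa using hn) hR hξs hε
  refine ⟨min δ 1, by positivity, fun t hδt ht u hu hu1 => ?_⟩
  have hharm := harmonicOnNhd_of_isHarmonicOn hΩo hu
  have hx : c + t • (ξ - c) ∈ ball c R := by
    have ht0 : 0 ≤ t := by linarith [min_le_right δ 1]
    rw [mem_ball_iff_norm, add_sub_cancel_left, norm_smul, norm_of_nonneg ht0,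
      mem_sphere_iff_norm.1 hξs]
    nlinarith
  have hdiff := (hharm _ (hball hx)).1.differentiableAt two_ne_zero
  rw [← divergence_eq_divg hdiff]
  simpa using hbound t (by linarith [min_le_left δ 1]) ht u (hharm.mono hball)
    fun y hy => hu1 y (hball hy)
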